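/- Assume that for ν-almost every x ∈ Σ the lower local dimension of ν at x is strictly greater than h_X. Then with probability 1, conditional on Q·ν ≠ 0, one has dim̲_H(ν) − h_X ≤ dim̲_H(Q·ν) ≤ dim̄_P(Q·ν) ≤ dim̄_P(ν) − h_X. -/

import Mathlib

open MeasureTheory ProbabilityTheory Filter Set
open scoped ENNReal

noncomputable section

/-- The one-sided symbolic space over the alphabet `{0, …, b-1}`. -/
abbrev SymbSpace (b : ℕ) : Type := ℕ → Fin b

/-- The cylinder `[w]` of sequences starting with the finite word `w`. -/
def cylinder {b : ℕ} (w : List (Fin b)) : Set (SymbSpace b) :=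
  {x | ∀ i : Fin w.length, x i = w.get i}

/-- The prefix `x|_n` of `x` of length `n`, as a finite word. -/
def wordPrefix {b : ℕ} (x : SymbSpace b) (n : ℕ) : List (Fin b) :=
  List.ofFn (fun i : Fin n => x i)

/-- `Y_w = X_{w_1} X_{w_1w_2} ⋯ X_{w_1⋯w_n}`. -/
def cascadeY {b : ℕ} {Ω : Type*} (X : List (Fin b) → Ω → ℝ) (w : List (Fin b)) (ω : Ω) : ℝ :=
  ∏ k ∈ Finset.range w.length, X (w.take (k + 1)) ω

/-- The total mass `Z_n = ∑_{|u| = n} Y_u ν([u])`. -/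
def cascadeZ {b : ℕ} {Ω : Type*} (X : List (Fin b) → Ω → ℝ) (ν : Measure (SymbSpace b))
    (n : ℕ) (ω : Ω) : ℝ :=
  ∑ u : Fin n → Fin b, cascadeY X (List.ofFn u) ω * (ν (cylinder (List.ofFn u))).toReal

/-- `Z = limsup_n Z_n`. -/
def cascadeZlim {b : ℕ} {Ω : Type*} (X : List (Fin b) → Ω → ℝ) (ν : Measure (SymbSpace b))
    (ω : Ω) : ℝ :=
  Filter.limsup (fun n => cascadeZ X ν n ω) atTop

/-- Assumption (M1): the weights `X_u`, `u` a nonempty finite word, are i.i.d. with common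
law that of the nonnegative random variable `X₀` of expectation 1. -/
structure CascadeM1 {b : ℕ} {Ω : Type*} [MeasurableSpace Ω] (P : Measure Ω)
    (X : List (Fin b) → Ω → ℝ) (X₀ : Ω → ℝ) : Prop where
  meas : ∀ w, Measurable (X w)
  nonneg : ∀ w ω, 0 ≤ X w ω
  meas₀ : Measurable X₀
  nonneg₀ : ∀ ω, 0 ≤ X₀ ω
  mean₀ : ∫ ω, X₀ ω ∂P = 1
  indep : iIndepFun
    (fun w : {w : List (Fin b) // w ≠ []} => X w.1) P
  ident : ∀ w : List (Fin b), w ≠ [] → IdentDistrib (X w) X₀ P P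

/-- `h_X = E(X log X) ∈ [0, ∞]` (well defined since `x log x ≥ -e⁻¹` and, by convexity,
`E(X log X) ≥ E(X) log E(X) = 0`), encoded as an extended nonnegative real. -/
def entropyX {Ω : Type*} [MeasurableSpace Ω] (P : Measure Ω) (X₀ : Ω → ℝ) : ℝ≥0∞ :=
  (∫⁻ ω, ENNReal.ofReal (X₀ ω * Real.log (X₀ ω)) ∂P) -
    (∫⁻ ω, ENNReal.ofReal (-(X₀ ω * Real.log (X₀ ω))) ∂P)

/-- The lower local dimension `liminf_n (-log ν([x|_n]) / n)` of `ν` at `x`, valued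
in `[0, ∞]`. -/
def lowerLocalDim {b : ℕ} (ν : Measure (SymbSpace b)) (x : SymbSpace b) : ℝ≥0∞ :=
  Filter.liminf
    (fun n : ℕ => ENNReal.ofReal (-Real.log ((ν (cylinder (wordPrefix x n))).toReal) / n))
    atTop

/-- The upper local dimension `limsup_n (-log ν([x|_n]) / n)` of `ν` at `x`. -/
def upperLocalDim {b : ℕ} (ν : Measure (SymbSpace b)) (x : SymbSpace b) : ℝ≥0∞ :=
  Filter.limsup
    (fun n : ℕ => ENNReal.ofReal (-Real.log ((ν (cylinder (wordPrefix x n))).toReal) / n))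
    atTop

/-- The lower Hausdorff dimension of `ν`: the `ν`-essential infimum of the lower local
dimension. -/
def lowerHausdorffDim {b : ℕ} (ν : Measure (SymbSpace b)) : ℝ≥0∞ :=
  essInf (lowerLocalDim ν) ν

/-- The upper Hausdorff dimension of `ν`: the `ν`-essential supremum of the lower local
dimension. -/
def upperHausdorffDim {b : ℕ} (ν : Measure (SymbSpace b)) : ℝ≥0∞ :=
  essSup (lowerLocalDim ν) ν

/-- The upper packing dimension of `ν`: the `ν`-essential supremum of the upper local
dimension. -/
def upperPackingDim {b : ℕ} (ν : Measure (SymbSpace b)) : ℝ≥0∞ :=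
  essSup (upperLocalDim ν) ν

/-!
Weight the pairs `(ω, x)` by the Peyrière measures `Q_n(ω, x) dP(ω) dν(x)`. Under them, the weights
along a fixed `x` are i.i.d. with the size-biased law of `X`, for which `log` has mean `h_X`; hence
`Q_n` grows like `e^{n h_X}`. An event about the prefixes of `x` that is rare for the Peyrière
measures, uniformly in the stage of the cascade, is by Fatou's lemma also rare for `Q·ν`.

The sequences at which `Q_m·ν([x|_n]) ≤ e^{-εn} Q_n·ν([x|_n])` carry expected `Q_m·ν`-mass at most
`e^{-εn}`. So `Q·ν([x|_n])` is eventually at least `e^{n (h_X - ε)} ν([x|_n])`, whence the upper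
bound. For the lower bound, truncate `Q_m` to the pairs where `Q_k ≤ e^{k (h_X + ε)}` and
`ν([x|_k]) ≤ e^{-kt}` for all `n ≤ k ≤ m`: little mass is lost, and the truncation has a second
moment. Independence of the weights past the branching level of `x` and `y` bounds the expected
energy `∫ γ([x|_n]) dγ(x)` of the truncated measure `γ`, hence the mass of the heavy cylinders.
-/

/-! ### Exponential rates -/

/-- The exponential `e^{cn}` as an extended nonnegative real. Masses of cylinders and values of
cascade densities at level `n` are compared with such rates throughout. -/
def expRate (c : ℝ) (n : ℕ) : ℝ≥0∞ := ENNReal.ofReal (Real.exp (n * c))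

lemma expRate_ne_zero (c : ℝ) (n : ℕ) : expRate c n ≠ 0 := by
  simp [expRate, Real.exp_pos]

lemma expRate_ne_top (c : ℝ) (n : ℕ) : expRate c n ≠ ∞ := ENNReal.ofReal_ne_top

lemma expRate_mul_expRate (c d : ℝ) (n : ℕ) :
    expRate c n * expRate d n = expRate (c + d) n := by
  rw [expRate, expRate, expRate, ← ENNReal.ofReal_mul (Real.exp_pos _).le, ← Real.exp_add, mul_add]

lemma expRate_mul_expRate_neg (c : ℝ) (n : ℕ) : expRate c n * expRate (-c) n = 1 := by
  rw [expRate_mul_expRate, add_neg_cancel]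
  simp [expRate]

lemma div_expRate_neg (z : ℝ≥0∞) (c : ℝ) (n : ℕ) : z / expRate (-c) n = expRate c n * z := by
  rw [ENNReal.eq_inv_of_mul_eq_one_left (expRate_mul_expRate_neg c n), mul_comm, div_eq_mul_inv]

lemma expRate_add (c : ℝ) (n k : ℕ) : expRate c (n + k) = expRate c n * expRate c k := by
  rw [expRate, expRate, expRate, ← ENNReal.ofReal_mul (Real.exp_pos _).le, ← Real.exp_add,
    Nat.cast_add, add_mul]

lemma tsum_expRate_ne_top {c : ℝ} (hc : c < 0) : ∑' n, expRate c n ≠ ∞ := by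
  have hlt : ENNReal.ofReal (Real.exp c) < 1 := by simpa using hc
  simp only [expRate, Real.exp_nat_mul, ENNReal.ofReal_pow (Real.exp_pos c).le,
    ENNReal.tsum_geometric]
  exact ENNReal.inv_ne_top.2 (tsub_pos_of_lt hlt).ne'

lemma sum_Icc_expRate_le (c : ℝ) (n m : ℕ) :
    ∑ k ∈ Finset.Icc n m, expRate c k ≤ expRate c n * ∑' j, expRate c j := by
  calc ∑ k ∈ Finset.Icc n m, expRate c k
      ≤ ∑ k ∈ Finset.Ico n (n + (m + 1)), expRate c k :=
        Finset.sum_le_sum_of_subset fun k => by simp only [Finset.mem_Icc, Finset.mem_Ico]; omega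
    _ = expRate c n * ∑ j ∈ Finset.range (m + 1), expRate c j := by
        simp [Finset.sum_Ico_eq_sum_range, expRate_add, Finset.mul_sum]
    _ ≤ expRate c n * ∑' j, expRate c j := by
        gcongr
        exact ENNReal.sum_le_tsum _

/-! ### Cylinders -/

section Cylinders

variable {b : ℕ}

/-- The projection of the symbolic space to the first `n` letters; the word `wordPrefix x n` is
`List.ofFn (firstLetters n x)`. Unlike the type of words, the target carries the measurable
structure and the finiteness that measure theory on level-`n` cylinders needs. -/
def firstLetters (n : ℕ) (x : SymbSpace b) : Fin n → Fin b := fun i => x i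

lemma measurable_firstLetters (n : ℕ) : Measurable (firstLetters (b := b) n) := by
  unfold firstLetters
  fun_prop

lemma cylinder_ofFn {n : ℕ} (u : Fin n → Fin b) :
    cylinder (List.ofFn u) = firstLetters n ⁻¹' {u} := by
  ext x
  change (∀ i : Fin (List.ofFn u).length, x i = (List.ofFn u).get i) ↔ firstLetters n x = u
  constructor
  · intro h
    funext i
    simpa [firstLetters] using h ⟨i, by simp⟩
  · rintro rfl i
    simp [firstLetters]

lemma measurableSet_cylinder (w : List (Fin b)) : MeasurableSet (cylinder w) := by
  rw [← List.ofFn_get w, cylinder_ofFn]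
  exact measurable_firstLetters _ (measurableSet_singleton _)

lemma mem_cylinder_wordPrefix_iff {x y : SymbSpace b} {n : ℕ} :
    y ∈ cylinder (wordPrefix x n) ↔ wordPrefix y n = wordPrefix x n := by
  rw [wordPrefix, wordPrefix, cylinder_ofFn, List.ofFn_inj]
  rfl

@[simp]
lemma length_wordPrefix (x : SymbSpace b) (n : ℕ) : (wordPrefix x n).length = n := by
  simp [wordPrefix]

lemma take_wordPrefix (x : SymbSpace b) {k n : ℕ} (h : k ≤ n) :
    (wordPrefix x n).take k = wordPrefix x k := by
  apply List.ext_getElem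
  · simp [h]
  · intro i _ _
    simp [wordPrefix]

lemma wordPrefix_succ_ne_nil (x : SymbSpace b) (k : ℕ) : wordPrefix x (k + 1) ≠ [] :=
  List.ne_nil_of_length_pos (by simp)

lemma wordPrefix_succ_injective (x : SymbSpace b) :
    Function.Injective fun k => wordPrefix x (k + 1) := fun i j h => by
  simpa using congrArg List.length h

lemma measurable_comp_wordPrefix {Ω β : Type*} [MeasurableSpace Ω] [MeasurableSpace β]
    {f : Ω → List (Fin b) → β} (hf : ∀ w, Measurable fun ω => f ω w) (n : ℕ) :
    Measurable fun p : Ω × SymbSpace b => f p.1 (wordPrefix p.2 n) := by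
  have h : Measurable fun p : Ω × (Fin n → Fin b) => f p.1 (List.ofFn p.2) :=
    measurable_from_prod_countable_left fun u => hf (List.ofFn u)
  exact h.comp (measurable_fst.prodMk ((measurable_firstLetters n).comp measurable_snd))

lemma measurableSet_setOf_wordPrefix {Ω : Type*} [MeasurableSpace Ω]
    {R : Ω → List (Fin b) → Prop} (hR : ∀ w, MeasurableSet {ω | R ω w}) (n : ℕ) :
    MeasurableSet {p : Ω × SymbSpace b | R p.1 (wordPrefix p.2 n)} := by
  rw [measurableSet_setOfPred]
  exact measurable_comp_wordPrefix (fun w => measurableSet_setOfPred.1 (hR w)) n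

lemma measurable_of_wordPrefix {β : Type*} [MeasurableSpace β] (f : List (Fin b) → β) (n : ℕ) :
    Measurable fun x => f (wordPrefix x n) :=
  (measurable_comp_wordPrefix (f := fun _ : Unit => f) (fun _ => measurable_const) n).comp
    (measurable_prodMk_left (x := ()))

lemma measure_setOf_wordPrefix_mem (μ : Measure (SymbSpace b)) (S : Set (List (Fin b)))
    [DecidablePred (· ∈ S)] (n : ℕ) :
    μ {x | wordPrefix x n ∈ S} =
      ∑ u : Fin n → Fin b with List.ofFn u ∈ S, μ (cylinder (List.ofFn u)) := by
  simp_rw [cylinder_ofFn]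
  rw [sum_measure_preimage_singleton _ fun u _ =>
    measurable_firstLetters n (measurableSet_singleton u)]
  congr 1
  ext x
  simp only [mem_ofPred_eq, Finset.coe_filter, Finset.mem_univ, true_and, mem_preimage]
  rfl

lemma measure_setOf_cylinder_le_mul_le (μ ν : Measure (SymbSpace b)) (s : ℝ≥0∞) (n : ℕ) :
    μ {x | μ (cylinder (wordPrefix x n)) ≤ s * ν (cylinder (wordPrefix x n))} ≤ s * ν univ := by
  classical
  let S : Set (List (Fin b)) := {w | μ (cylinder w) ≤ s * ν (cylinder w)}
  calc μ {x | wordPrefix x n ∈ S}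
      = ∑ u : Fin n → Fin b with List.ofFn u ∈ S, μ (cylinder (List.ofFn u)) :=
        measure_setOf_wordPrefix_mem μ S n
    _ ≤ ∑ u : Fin n → Fin b with List.ofFn u ∈ S, s * ν (cylinder (List.ofFn u)) :=
        Finset.sum_le_sum fun u hu => (Finset.mem_filter.1 hu).2
    _ = s * ν {x | wordPrefix x n ∈ S} := by
        rw [← Finset.mul_sum, measure_setOf_wordPrefix_mem ν S n]
    _ ≤ s * ν univ := by
        gcongr
        exact subset_univ _

lemma ae_forall_measure_cylinder_wordPrefix_ne_zero (μ : Measure (SymbSpace b)) :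
    ∀ᵐ x ∂μ, ∀ n, μ (cylinder (wordPrefix x n)) ≠ 0 := by
  refine ae_all_iff.2 fun n => ?_
  simpa [ae_iff] using measure_setOf_cylinder_le_mul_le μ 0 0 n

lemma tendsto_measure_setOf_wordPrefix_mem {ι : Type*} {l : Filter ι}
    {μ : ι → Measure (SymbSpace b)} {μ' : Measure (SymbSpace b)}
    (h : ∀ w, Tendsto (fun m => μ m (cylinder w)) l (nhds (μ' (cylinder w))))
    (S : Set (List (Fin b))) (n : ℕ) :
    Tendsto (fun m => μ m {x | wordPrefix x n ∈ S}) l (nhds (μ' {x | wordPrefix x n ∈ S})) := by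
  classical
  simp_rw [measure_setOf_wordPrefix_mem]
  exact tendsto_finsetSum _ fun u _ => h _

end Cylinders

/-! ### Densities on product spaces -/

section ProdDensity

variable {α β : Type*} [MeasurableSpace α] [MeasurableSpace β] {μ : Measure α} {ν : Measure β}
  {f : α × β → ℝ≥0∞} {A : Set (α × β)}

lemma measurable_withDensity_prodMk_left [SFinite ν] (hf : Measurable f) (hA : MeasurableSet A) :
    Measurable fun a => (ν.withDensity fun b => f (a, b)) (Prod.mk a ⁻¹' A) := by
  have h : ∀ a, (ν.withDensity fun b => f (a, b)) (Prod.mk a ⁻¹' A)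
      = ∫⁻ b, A.indicator f (a, b) ∂ν := fun a => by
    rw [withDensity_apply _ (measurable_prodMk_left hA),
      ← lintegral_indicator (measurable_prodMk_left hA)]
    rfl
  simp_rw [h]
  exact (hf.indicator hA).lintegral_prod_right'

lemma withDensity_prod_apply [SFinite ν] (hf : Measurable f) (hA : MeasurableSet A) :
    (μ.prod ν).withDensity f A
      = ∫⁻ a, (ν.withDensity fun b => f (a, b)) (Prod.mk a ⁻¹' A) ∂μ := by
  rw [withDensity_apply _ hA, ← lintegral_indicator hA,
    lintegral_prod _ (hf.indicator hA).aemeasurable]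
  refine lintegral_congr fun a => ?_
  rw [withDensity_apply _ (measurable_prodMk_left hA),
    ← lintegral_indicator (measurable_prodMk_left hA)]
  rfl

lemma withDensity_prod_apply_symm [SFinite μ] [SFinite ν] (hf : Measurable f)
    (hA : MeasurableSet A) :
    (μ.prod ν).withDensity f A
      = ∫⁻ b, (μ.withDensity fun a => f (a, b)) ((fun a => (a, b)) ⁻¹' A) ∂ν := by
  rw [withDensity_apply _ hA, ← lintegral_indicator hA,
    lintegral_prod_symm _ (hf.indicator hA).aemeasurable]
  refine lintegral_congr fun b => ?_
  rw [withDensity_apply _ (measurable_prodMk_right hA),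
    ← lintegral_indicator (measurable_prodMk_right hA)]
  rfl

end ProdDensity

/-! ### The cascade measures and the Peyrière measures -/

section Cascade

variable {b : ℕ} {Ω : Type*} {X : List (Fin b) → Ω → ℝ}

/-- The density `Q_n(ω, x) = X_{x|_1}(ω) ⋯ X_{x|_n}(ω)` of the cascade. -/
def cascadeDensity (X : List (Fin b) → Ω → ℝ) (n : ℕ) (ω : Ω) (x : SymbSpace b) : ℝ≥0∞ :=
  ENNReal.ofReal (cascadeY X (wordPrefix x n) ω)

/-- The `n`-th step `Q_n(ω, ·) ν` of the cascade acting on `ν`. -/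
def cascadeMeasure (X : List (Fin b) → Ω → ℝ) (ν : Measure (SymbSpace b)) (n : ℕ) (ω : Ω) :
    Measure (SymbSpace b) :=
  ν.withDensity (cascadeDensity X n ω)

lemma cascadeY_wordPrefix (X : List (Fin b) → Ω → ℝ) (x : SymbSpace b) (n : ℕ) (ω : Ω) :
    cascadeY X (wordPrefix x n) ω = ∏ k ∈ Finset.range n, X (wordPrefix x (k + 1)) ω := by
  unfold cascadeY
  rw [length_wordPrefix]
  refine Finset.prod_congr rfl fun k hk => ?_
  rw [take_wordPrefix x (by simpa using hk)]

lemma cascadeDensity_eq_prod (hX : ∀ w ω, 0 ≤ X w ω) (n : ℕ) (ω : Ω) (x : SymbSpace b) :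
    cascadeDensity X n ω x
      = ∏ k ∈ Finset.range n, ENNReal.ofReal (X (wordPrefix x (k + 1)) ω) := by
  rw [cascadeDensity, cascadeY_wordPrefix, ENNReal.ofReal_prod_of_nonneg fun _ _ => hX _ _]

lemma cascadeMeasure_cylinder_wordPrefix (X : List (Fin b) → Ω → ℝ) (ν : Measure (SymbSpace b))
    (n : ℕ) (ω : Ω) (x : SymbSpace b) :
    cascadeMeasure X ν n ω (cylinder (wordPrefix x n))
      = cascadeDensity X n ω x * ν (cylinder (wordPrefix x n)) := by
  have hcyl := measurableSet_cylinder (wordPrefix x n)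
  rw [cascadeMeasure, withDensity_apply _ hcyl, ← setLIntegral_const]
  refine setLIntegral_congr_fun hcyl fun y hy => ?_
  simp only [cascadeDensity, mem_cylinder_wordPrefix_iff.1 hy]

variable [MeasurableSpace Ω] {P : Measure Ω} {ν : Measure (SymbSpace b)}

/-- `Qν ω` is the limit `Q·ν` of the cascade measures, for almost every `ω`: as cylinders form a
base of clopen sets, weak convergence amounts to convergence on every cylinder. -/
def IsCascadeLimit (P : Measure Ω) (X : List (Fin b) → Ω → ℝ) (ν : Measure (SymbSpace b))
    (Qν : Ω → Measure (SymbSpace b)) : Prop :=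
  ∀ᵐ ω ∂P, ∀ w, Tendsto (fun n => cascadeMeasure X ν n ω (cylinder w)) atTop
    (nhds (Qν ω (cylinder w)))

/-- The `n`-th Peyrière measure `Q_n(ω, x) dP(ω) dν(x)` on `Ω × Σ`, that is, the `P`-mixture of
the measures `cascadeMeasure X ν n ω`. -/
def peyriereMeasure (P : Measure Ω) (X : List (Fin b) → Ω → ℝ) (ν : Measure (SymbSpace b))
    (n : ℕ) : Measure (Ω × SymbSpace b) :=
  (P.prod ν).withDensity fun p => cascadeDensity X n p.1 p.2

lemma measurable_cascadeY (hX : ∀ w, Measurable (X w)) (w : List (Fin b)) :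
    Measurable (cascadeY X w) :=
  Finset.measurable_prod _ fun _ _ => hX _

lemma measurable_cascadeDensity (hX : ∀ w, Measurable (X w)) (n : ℕ) :
    Measurable fun p : Ω × SymbSpace b => cascadeDensity X n p.1 p.2 :=
  measurable_comp_wordPrefix (f := fun ω w => ENNReal.ofReal (cascadeY X w ω))
    (fun w => (measurable_cascadeY hX w).ennreal_ofReal) n

variable [SFinite ν]

lemma measurable_cascadeMeasure_apply (hX : ∀ w, Measurable (X w)) (n : ℕ)
    {A : Set (Ω × SymbSpace b)} (hA : MeasurableSet A) :
    Measurable fun ω => cascadeMeasure X ν n ω (Prod.mk ω ⁻¹' A) :=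
  measurable_withDensity_prodMk_left (f := fun p => cascadeDensity X n p.1 p.2)
    (measurable_cascadeDensity hX n) hA

lemma measurable_cascadeMeasure_cylinder (hX : ∀ w, Measurable (X w)) (n : ℕ)
    (w : List (Fin b)) : Measurable fun ω => cascadeMeasure X ν n ω (cylinder w) :=
  measurable_cascadeMeasure_apply hX n (A := Prod.snd ⁻¹' cylinder w)
    (measurable_snd (measurableSet_cylinder w))

lemma peyriereMeasure_apply (hX : ∀ w, Measurable (X w)) (n : ℕ)
    {A : Set (Ω × SymbSpace b)} (hA : MeasurableSet A) :
    peyriereMeasure P X ν n A = ∫⁻ ω, cascadeMeasure X ν n ω (Prod.mk ω ⁻¹' A) ∂P :=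
  withDensity_prod_apply (f := fun p => cascadeDensity X n p.1 p.2)
    (measurable_cascadeDensity hX n) hA

lemma peyriereMeasure_apply_symm [SFinite P] (hX : ∀ w, Measurable (X w)) (n : ℕ)
    {A : Set (Ω × SymbSpace b)} (hA : MeasurableSet A) :
    peyriereMeasure P X ν n A
      = ∫⁻ x, P.withDensity (cascadeDensity X n · x) ((fun ω => (ω, x)) ⁻¹' A) ∂ν :=
  withDensity_prod_apply_symm (f := fun p => cascadeDensity X n p.1 p.2)
    (measurable_cascadeDensity hX n) hA

end Cascade

/-! ### Independence of the weights -/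

section Independence

variable {b : ℕ} {Ω : Type*} [MeasurableSpace Ω] {P : Measure Ω} {X : List (Fin b) → Ω → ℝ}
  {X₀ : Ω → ℝ}

lemma integrable_X₀ (hM1 : CascadeM1 P X X₀) : Integrable X₀ P :=
  Integrable.of_integral_ne_zero (by simp [hM1.mean₀])

lemma lintegral_ofReal_X₀ (hM1 : CascadeM1 P X X₀) : ∫⁻ ω, ENNReal.ofReal (X₀ ω) ∂P = 1 := by
  rw [← ofReal_integral_eq_lintegral_ofReal (integrable_X₀ hM1) (ae_of_all _ hM1.nonneg₀),
    hM1.mean₀, ENNReal.ofReal_one]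

lemma lintegral_prod_comp_weights (hM1 : CascadeM1 P X X₀) {ι : Type*} [Fintype ι]
    {w : ι → List (Fin b)} (hw : Function.Injective w) (hne : ∀ i, w i ≠ [])
    {f : ι → ℝ → ℝ≥0∞} (hf : ∀ i, Measurable (f i)) :
    ∫⁻ ω, ∏ i, f i (X (w i) ω) ∂P = ∏ i, ∫⁻ ω, f i (X₀ ω) ∂P := by
  have hindep : iIndepFun (fun i => f i ∘ X (w i)) P :=
    (hM1.indep.precomp (g := fun i => (⟨w i, hne i⟩ : {w : List (Fin b) // w ≠ []}))
      fun i j h => hw (congrArg Subtype.val h)).comp f hf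
  calc ∫⁻ ω, ∏ i, f i (X (w i) ω) ∂P = ∏ i, ∫⁻ ω, f i (X (w i) ω) ∂P :=
        lintegral_prod_eq_prod_lintegral_of_indepFun Finset.univ _ hindep
          fun i => (hf i).comp (hM1.meas _)
    _ = ∏ i, ∫⁻ ω, f i (X₀ ω) ∂P :=
        Finset.prod_congr rfl fun i _ => ((hM1.ident _ (hne i)).comp (hf i)).lintegral_eq

lemma lintegral_prod_ofReal_weights (hM1 : CascadeM1 P X X₀) {S : Finset (List (Fin b))}
    (hS : [] ∉ S) : ∫⁻ ω, ∏ w ∈ S, ENNReal.ofReal (X w ω) ∂P = 1 := by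
  have h := lintegral_prod_comp_weights hM1 (w := fun i : S => i.1) Subtype.val_injective
    (fun i hi => hS (hi ▸ i.2)) (fun _ => ENNReal.measurable_ofReal)
  simp only [lintegral_ofReal_X₀ hM1, Finset.prod_const_one] at h
  rw [← h]
  exact lintegral_congr fun ω => (Finset.prod_coe_sort S fun w => ENNReal.ofReal (X w ω)).symm

lemma lintegral_cascadeDensity (hM1 : CascadeM1 P X X₀) (n : ℕ) (x : SymbSpace b) :
    ∫⁻ ω, cascadeDensity X n ω x ∂P = 1 := by
  classical
  simp_rw [cascadeDensity_eq_prod hM1.nonneg]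
  rw [← lintegral_prod_ofReal_weights hM1
    (S := (Finset.range n).image fun k => wordPrefix x (k + 1))
    (by simp [wordPrefix_succ_ne_nil])]
  simp_rw [Finset.prod_image (wordPrefix_succ_injective x).injOn]

lemma peyriereMeasure_preimage_snd [SFinite P] (hM1 : CascadeM1 P X X₀)
    (ν : Measure (SymbSpace b)) [SFinite ν] (n : ℕ) {B : Set (SymbSpace b)}
    (hB : MeasurableSet B) : peyriereMeasure P X ν n (Prod.snd ⁻¹' B) = ν B := by
  rw [peyriereMeasure_apply_symm hM1.meas n (measurable_snd hB), ← lintegral_indicator_one hB]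
  refine lintegral_congr fun x => ?_
  by_cases hx : x ∈ B <;> simp [hx, preimage_preimage, lintegral_cascadeDensity hM1]

lemma lintegral_cascadeMeasure_univ [SFinite P] (hM1 : CascadeM1 P X X₀)
    (ν : Measure (SymbSpace b)) [SFinite ν] (n : ℕ) :
    ∫⁻ ω, cascadeMeasure X ν n ω univ ∂P = ν univ := by
  rw [← peyriereMeasure_preimage_snd hM1 ν n MeasurableSet.univ, preimage_univ,
    peyriereMeasure_apply hM1.meas n MeasurableSet.univ]
  rfl

end Independence

/-! ### Rare arrays of events -/

lemma tendsto_measure_biUnion_Ici_of_ae_eventually_notMem {α : Type*} [MeasurableSpace α]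
    {μ : Measure α} [IsFiniteMeasure μ] {D : ℕ → Set α} (hD : ∀ n, MeasurableSet (D n))
    (h : ∀ᵐ z ∂μ, ∀ᶠ n in atTop, z ∉ D n) :
    Tendsto (fun N => μ (⋃ n ∈ Ici N, D n)) atTop (nhds 0) := by
  have hanti : Antitone fun N => ⋃ n ∈ Ici N, D n :=
    fun M N hMN => biUnion_subset_biUnion_left (Ici_subset_Ici.2 hMN)
  have hnull : μ (⋂ N, ⋃ n ∈ Ici N, D n) = 0 := by
    refine measure_mono_null (fun z hz => ?_) (ae_iff.1 h)
    simp only [mem_iInter, mem_iUnion, mem_Ici, exists_prop] at hz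
    simpa [mem_ofPred_eq, frequently_atTop] using hz
  rw [← hnull]
  exact tendsto_measure_iInter_atTop
    (fun N => (MeasurableSet.biUnion (to_countable _) fun n _ => hD n).nullMeasurableSet)
    hanti ⟨0, measure_ne_top _ _⟩

section Rare

variable {b : ℕ} {Ω : Type*} [MeasurableSpace Ω] {P : Measure Ω} {X : List (Fin b) → Ω → ℝ}
  {ν : Measure (SymbSpace b)} {E F : ℕ → ℕ → Set (Ω × SymbSpace b)}

/-- For an array of events `E m n`, where `m` is the stage of the cascade and `n ≤ m` the level of
the cylinders that the event is about: the worst Peyrière probability, over all stages `m`, that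
some `E m n` with `n ≥ M` occurs. -/
def tailMass (P : Measure Ω) (X : List (Fin b) → Ω → ℝ) (ν : Measure (SymbSpace b))
    (E : ℕ → ℕ → Set (Ω × SymbSpace b)) (M : ℕ) : ℝ≥0∞ :=
  ⨆ m, peyriereMeasure P X ν m (⋃ n ∈ Icc M m, E m n)

/-- An array of events is rare if large levels contribute little, uniformly in the stage. By
`IsRare.ae_ae_eventually_not`, such events occur for finitely many levels in the limit. -/
def IsRare (P : Measure Ω) (X : List (Fin b) → Ω → ℝ) (ν : Measure (SymbSpace b))
    (E : ℕ → ℕ → Set (Ω × SymbSpace b)) : Prop :=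
  Tendsto (tailMass P X ν E) atTop (nhds 0)

lemma isRare_of_tailMass_le {u : ℕ → ℝ≥0∞} (hu : Tendsto u atTop (nhds 0))
    (h : ∀ M, tailMass P X ν E M ≤ u M) : IsRare P X ν E :=
  tendsto_of_tendsto_of_tendsto_of_le_of_le tendsto_const_nhds hu (fun _ => zero_le) h

lemma IsRare.mono (hF : IsRare P X ν F) (h : ∀ m n, n ≤ m → E m n ⊆ F m n) :
    IsRare P X ν E :=
  isRare_of_tailMass_le hF fun _ => iSup_mono fun m =>
    measure_mono (iUnion₂_mono fun n hn => h m n hn.2)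

lemma IsRare.union (hE : IsRare P X ν E) (hF : IsRare P X ν F) :
    IsRare P X ν fun m n => E m n ∪ F m n := by
  refine isRare_of_tailMass_le (u := fun M => tailMass P X ν E M + tailMass P X ν F M)
    (by simpa using Tendsto.add hE hF) fun M => iSup_le fun m => ?_
  simp only [iUnion_union_distrib]
  exact (measure_union_le _ _).trans
    (add_le_add (le_iSup_of_le m le_rfl) (le_iSup_of_le m le_rfl))

lemma isRare_of_tsum_ne_top {c : ℕ → ℝ≥0∞} (hc : ∑' n, c n ≠ ∞)
    (h : ∀ m n, n ≤ m → peyriereMeasure P X ν m (E m n) ≤ c n) : IsRare P X ν E := by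
  refine isRare_of_tailMass_le (ENNReal.tendsto_sum_nat_add c hc) fun M => iSup_le fun m => ?_
  calc peyriereMeasure P X ν m (⋃ n ∈ Icc M m, E m n)
      ≤ ∑ n ∈ Finset.Icc M m, peyriereMeasure P X ν m (E m n) := by
        simpa using measure_biUnion_finset_le (Finset.Icc M m) (E m)
    _ ≤ ∑ n ∈ Finset.Icc M m, c n :=
        Finset.sum_le_sum fun n hn => h m n (Finset.mem_Icc.1 hn).2
    _ ≤ ∑ n ∈ Finset.Ico M (M + (m + 1)), c n :=
        Finset.sum_le_sum_of_subset fun n => by simp only [Finset.mem_Icc, Finset.mem_Ico]; omega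
    _ = ∑ n ∈ Finset.range (m + 1), c (n + M) := by
        simp [Finset.sum_Ico_eq_sum_range, add_comm]
    _ ≤ ∑' n, c (n + M) := ENNReal.sum_le_tsum _

lemma IsRare.biUnion_Icc (hE : IsRare P X ν E) :
    IsRare P X ν fun m n => ⋃ k ∈ Icc n m, E m k := by
  refine isRare_of_tailMass_le hE fun M => iSup_mono fun m => measure_mono ?_
  simp only [iUnion_subset_iff]
  exact fun n hn k hk => subset_biUnion_of_mem (u := E m) ⟨hn.1.trans hk.1, hk.2⟩

lemma isRare_preimage_snd [SFinite P] {X₀ : Ω → ℝ} (hM1 : CascadeM1 P X X₀) [IsFiniteMeasure ν]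
    {D : ℕ → Set (SymbSpace b)} (hD : ∀ n, MeasurableSet (D n))
    (h : ∀ᵐ x ∂ν, ∀ᶠ n in atTop, x ∉ D n) :
    IsRare P X ν fun _ n => Prod.snd ⁻¹' D n := by
  refine isRare_of_tailMass_le (tendsto_measure_biUnion_Ici_of_ae_eventually_notMem hD h)
    fun M => iSup_le fun m => ?_
  rw [← peyriereMeasure_preimage_snd hM1 ν m
    (MeasurableSet.biUnion (to_countable _) fun n _ => hD n), preimage_iUnion₂]
  exact measure_mono (biUnion_subset_biUnion_left Icc_subset_Ici_self)

/-! ### Rare events do not persist in the limit -/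

/-- The mass that the limit measure can give, by Fatou's lemma, to the occurrence of some `E m n`
with `n ≥ M` at arbitrarily late stages `m`. -/
def fatouTailMass (X : List (Fin b) → Ω → ℝ) (ν : Measure (SymbSpace b))
    (E : ℕ → ℕ → Set (Ω × SymbSpace b)) (M : ℕ) (ω : Ω) : ℝ≥0∞ :=
  ⨆ L, liminf (fun m => cascadeMeasure X ν m ω (Prod.mk ω ⁻¹' ⋃ n ∈ Icc M L, E m n)) atTop

section Fatou

variable [SFinite ν] (hX : ∀ w, Measurable (X w)) (hE : ∀ m n, MeasurableSet (E m n))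
include hX hE

lemma measurable_cascadeMeasure_biUnion (M L m : ℕ) :
    Measurable fun ω => cascadeMeasure X ν m ω (Prod.mk ω ⁻¹' ⋃ n ∈ Icc M L, E m n) :=
  measurable_cascadeMeasure_apply hX m
    (MeasurableSet.biUnion (to_countable _) fun n _ => hE m n)

lemma measurable_fatouTailMass (M : ℕ) : Measurable (fatouTailMass X ν E M) :=
  Measurable.iSup fun L => Measurable.liminf fun m =>
    measurable_cascadeMeasure_biUnion hX hE M L m

lemma lintegral_fatouTailMass_le (M : ℕ) :
    ∫⁻ ω, fatouTailMass X ν E M ω ∂P ≤ tailMass P X ν E M := by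
  have hmono : Monotone fun L ω =>
      liminf (fun m => cascadeMeasure X ν m ω (Prod.mk ω ⁻¹' ⋃ n ∈ Icc M L, E m n)) atTop :=
    fun L L' hLL' ω => liminf_le_liminf (Eventually.of_forall fun m => measure_mono
      (preimage_mono (biUnion_subset_biUnion_left (Icc_subset_Icc_right hLL'))))
  simp_rw [fatouTailMass]
  rw [lintegral_iSup (fun L => Measurable.liminf fun m =>
    measurable_cascadeMeasure_biUnion hX hE M L m) hmono]
  refine iSup_le fun L => (lintegral_liminf_le fun m =>
    measurable_cascadeMeasure_biUnion hX hE M L m).trans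
    (liminf_le_of_frequently_le' (Eventually.frequently ?_))
  filter_upwards [eventually_ge_atTop L] with m hLm
  rw [← peyriereMeasure_apply hX m
    (MeasurableSet.biUnion (to_countable _) fun n _ => hE m n)]
  exact (measure_mono (biUnion_subset_biUnion_left (Icc_subset_Icc_right hLm))).trans
    (le_iSup (fun m => peyriereMeasure P X ν m (⋃ n ∈ Icc M m, E m n)) m)

lemma IsRare.ae_iInf_fatouTailMass_eq_zero (hrare : IsRare P X ν E) :
    ∀ᵐ ω ∂P, ⨅ M, fatouTailMass X ν E M ω = 0 := by
  have hle : ∀ M, ∫⁻ ω, ⨅ M, fatouTailMass X ν E M ω ∂P ≤ tailMass P X ν E M := fun M =>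
    (lintegral_mono fun ω => iInf_le _ M).trans (lintegral_fatouTailMass_le hX hE M)
  have hzero : ∫⁻ ω, ⨅ M, fatouTailMass X ν E M ω ∂P = 0 :=
    le_antisymm (ge_of_tendsto' hrare hle) zero_le
  exact (lintegral_eq_zero_iff (Measurable.iInf fun M => measurable_fatouTailMass hX hE M)).1 hzero

end Fatou

lemma measure_setOf_exists_wordPrefix_le_liminf {μ : ℕ → Measure (SymbSpace b)}
    {μ' : Measure (SymbSpace b)}
    (hμ : ∀ w, Tendsto (fun m => μ m (cylinder w)) atTop (nhds (μ' (cylinder w))))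
    {R : ℕ → ℕ → List (Fin b) → Prop} {R' : ℕ → List (Fin b) → Prop}
    (hR : ∀ n w, R' n w → ∀ᶠ m in atTop, R m n w) (M L : ℕ) :
    μ' {x | ∃ n ∈ Icc M L, R' n (wordPrefix x n)}
      ≤ liminf (fun m => μ m {x | ∃ n ∈ Icc M L, R m n (wordPrefix x n)}) atTop := by
  have htake : {x : SymbSpace b | ∃ n ∈ Icc M L, R' n (wordPrefix x n)}
      = {x | wordPrefix x L ∈ {w | ∃ n ∈ Icc M L, R' n (w.take n)}} := by
    ext x
    refine exists_congr fun n => and_congr_right fun hn => ?_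
    rw [take_wordPrefix x hn.2]
  have hev : ∀ᶠ m in atTop, ∀ n ∈ Finset.Icc M L, ∀ u : Fin n → Fin b,
      R' n (List.ofFn u) → R m n (List.ofFn u) := by
    refine (eventually_all_finset _).2 fun n _ => eventually_all.2 fun u => ?_
    by_cases h : R' n (List.ofFn u)
    · filter_upwards [hR n _ h] with m hm _ using hm
    · exact Eventually.of_forall fun m h' => absurd h' h
  rw [htake, ← (tendsto_measure_setOf_wordPrefix_mem hμ _ L).liminf_eq, ← htake]
  refine liminf_le_liminf ?_
  filter_upwards [hev] with m hm
  exact measure_mono fun x ⟨n, hn, hx⟩ =>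
    ⟨n, hn, hm n (Finset.mem_Icc.2 hn) (firstLetters n x) hx⟩

lemma IsRare.ae_ae_eventually_not [SFinite ν] (hX : ∀ w, Measurable (X w))
    {Qν : Ω → Measure (SymbSpace b)} (hQν : IsCascadeLimit P X ν Qν)
    {R : ℕ → ℕ → Ω → List (Fin b) → Prop} {R' : ℕ → Ω → List (Fin b) → Prop}
    (hR : ∀ m n w, MeasurableSet {ω | R m n ω w})
    (hlim : ∀ᵐ ω ∂P, ∀ n w, R' n ω w → ∀ᶠ m in atTop, R m n ω w)
    (hrare : IsRare P X ν fun m n => {p | R m n p.1 (wordPrefix p.2 n)}) :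
    ∀ᵐ ω ∂P, ∀ᵐ x ∂(Qν ω), ∀ᶠ n in atTop, ¬ R' n ω (wordPrefix x n) := by
  have hE : ∀ m n, MeasurableSet {p : Ω × SymbSpace b | R m n p.1 (wordPrefix p.2 n)} :=
    fun m n => measurableSet_setOf_wordPrefix (hR m n) n
  filter_upwards [hQν, hlim, hrare.ae_iInf_fatouTailMass_eq_zero hX hE] with ω hω hlimω hzero
  refine le_antisymm (hzero ▸ le_iInf fun M => ?_) zero_le
  have hmono : Monotone fun L => {x | ∃ n ∈ Icc M L, R' n ω (wordPrefix x n)} :=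
    fun L L' h x ⟨n, hn, hx⟩ => ⟨n, Icc_subset_Icc_right h hn, hx⟩
  have hsub : {x | ∀ᶠ n in atTop, ¬ R' n ω (wordPrefix x n)}ᶜ
      ⊆ ⋃ L, {x | ∃ n ∈ Icc M L, R' n ω (wordPrefix x n)} := by
    intro x hx
    obtain ⟨n, hMn, hn⟩ := frequently_atTop.1 (not_eventually.1 hx) M
    exact mem_iUnion.2 ⟨n, n, ⟨hMn, le_rfl⟩, not_not.1 hn⟩
  refine (measure_mono hsub).trans ?_
  rw [hmono.measure_iUnion]
  refine iSup_mono fun L => ?_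
  have hsection : ∀ m, (Prod.mk ω ⁻¹' ⋃ n ∈ Icc M L, {p | R m n p.1 (wordPrefix p.2 n)})
      = {x | ∃ n ∈ Icc M L, R m n ω (wordPrefix x n)} := fun m => by ext x; simp
  simp_rw [hsection]
  exact measure_setOf_exists_wordPrefix_le_liminf hω hlimω M L

end Rare

/-! ### The size-biased law -/

section SizeBiased

variable {Ω : Type*} [MeasurableSpace Ω] {P : Measure Ω}

lemma integrable_of_lintegral_ofReal_ne_top {f : Ω → ℝ} (hf : Measurable f)
    (hpos : ∫⁻ ω, ENNReal.ofReal (f ω) ∂P ≠ ∞) (hneg : ∫⁻ ω, ENNReal.ofReal (-f ω) ∂P ≠ ∞) :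
    Integrable f P := by
  refine ⟨hf.aestronglyMeasurable, ?_⟩
  calc ∫⁻ ω, ‖f ω‖ₑ ∂P ≤ ∫⁻ ω, (ENNReal.ofReal (f ω) + ENNReal.ofReal (-f ω)) ∂P := by
        refine lintegral_mono fun ω => ?_
        rw [Real.enorm_eq_ofReal_abs]
        rcases abs_choice (f ω) with h | h <;> simp [h]
    _ = ∫⁻ ω, ENNReal.ofReal (f ω) ∂P + ∫⁻ ω, ENNReal.ofReal (-f ω) ∂P :=
        lintegral_add_left hf.ennreal_ofReal _
    _ < ∞ := ENNReal.add_lt_top.2 ⟨hpos.lt_top, hneg.lt_top⟩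

variable {b : ℕ} {X : List (Fin b) → Ω → ℝ} {X₀ : Ω → ℝ}

lemma integrable_mul_log_X₀ [IsFiniteMeasure P] (hM1 : CascadeM1 P X X₀)
    (hfin : entropyX P X₀ ≠ ∞) :
    Integrable (fun ω => X₀ ω * Real.log (X₀ ω)) P := by
  have hneg : ∫⁻ ω, ENNReal.ofReal (-(X₀ ω * Real.log (X₀ ω))) ∂P ≠ ∞ := by
    refine ne_top_of_le_ne_top (b := ∫⁻ _, 1 ∂P) (by simp) (lintegral_mono fun ω => ?_)
    rw [ENNReal.ofReal_le_one]
    linarith [hM1.nonneg₀ ω, Real.self_sub_one_le_mul_log (hM1.nonneg₀ ω)]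
  refine integrable_of_lintegral_ofReal_ne_top
    (hM1.meas₀.mul (Real.measurable_log.comp hM1.meas₀)) (fun hpos => hfin ?_) hneg
  rw [entropyX, hpos, ENNReal.top_sub hneg]

lemma integral_mul_log_X₀ [IsProbabilityMeasure P] (hM1 : CascadeM1 P X X₀)
    (hfin : entropyX P X₀ ≠ ∞) :
    ∫ ω, X₀ ω * Real.log (X₀ ω) ∂P = (entropyX P X₀).toReal := by
  have hint := integrable_mul_log_X₀ hM1 hfin
  have hge : 0 ≤ ∫ ω, X₀ ω * Real.log (X₀ ω) ∂P := by
    calc 0 = ∫ ω, (X₀ ω - 1) ∂P := by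
          simp [integral_sub (integrable_X₀ hM1) (integrable_const _), hM1.mean₀]
      _ ≤ ∫ ω, X₀ ω * Real.log (X₀ ω) ∂P :=
          integral_mono ((integrable_X₀ hM1).sub (integrable_const _)) hint
            fun ω => Real.self_sub_one_le_mul_log (hM1.nonneg₀ ω)
  have hpos : ∫⁻ ω, ENNReal.ofReal (X₀ ω * Real.log (X₀ ω)) ∂P ≠ ∞ := hint.lintegral_lt_top.ne
  have hneg : ∫⁻ ω, ENNReal.ofReal (-(X₀ ω * Real.log (X₀ ω))) ∂P ≠ ∞ :=
    hint.neg.lintegral_lt_top.ne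
  rw [integral_eq_lintegral_pos_part_sub_lintegral_neg_part hint] at hge ⊢
  rw [entropyX, ENNReal.toReal_sub_of_le ((ENNReal.toReal_le_toReal hneg hpos).1 (by linarith))
    hpos]

/-- The size-biased law `z · P(X₀ ∈ dz)` of the weights, under which `log` has mean `h_X`. Along a
fixed `x`, the weights follow it under `Q_n(ω, x) dP(ω)`. -/
def sizeBiasedLaw (P : Measure Ω) (X₀ : Ω → ℝ) : Measure ℝ :=
  (P.map X₀).withDensity ENNReal.ofReal

lemma sizeBiasedLaw_apply (hX₀ : Measurable X₀) {s : Set ℝ} (hs : MeasurableSet s) :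
    sizeBiasedLaw P X₀ s = ∫⁻ ω, s.indicator ENNReal.ofReal (X₀ ω) ∂P := by
  rw [sizeBiasedLaw, withDensity_apply _ hs, ← lintegral_indicator hs,
    lintegral_map (ENNReal.measurable_ofReal.indicator hs) hX₀]

lemma isProbabilityMeasure_sizeBiasedLaw (hM1 : CascadeM1 P X X₀) :
    IsProbabilityMeasure (sizeBiasedLaw P X₀) :=
  ⟨by simpa [sizeBiasedLaw_apply hM1.meas₀ MeasurableSet.univ] using lintegral_ofReal_X₀ hM1⟩

lemma ae_pos_sizeBiasedLaw (hX₀ : Measurable X₀) : ∀ᵐ z ∂(sizeBiasedLaw P X₀), 0 < z := by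
  have h : ∀ z, (Iic (0 : ℝ)).indicator ENNReal.ofReal z = 0 := fun z => by
    simp [indicator_apply_eq_zero]
  simp only [ae_iff, not_lt]
  change sizeBiasedLaw P X₀ (Iic 0) = 0
  simp [sizeBiasedLaw_apply hX₀ measurableSet_Iic, h]

lemma integrable_log_sizeBiasedLaw [IsFiniteMeasure P] (hM1 : CascadeM1 P X X₀)
    (hfin : entropyX P X₀ ≠ ∞) : Integrable Real.log (sizeBiasedLaw P X₀) := by
  rw [sizeBiasedLaw, integrable_withDensity_iff_integrable_smul' ENNReal.measurable_ofReal
    (ae_of_all _ fun _ => ENNReal.ofReal_lt_top),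
    integrable_map_measure (by fun_prop) hM1.meas₀.aemeasurable]
  simpa [Function.comp_def, ENNReal.toReal_ofReal (hM1.nonneg₀ _)] using
    integrable_mul_log_X₀ hM1 hfin

lemma integral_log_sizeBiasedLaw [IsProbabilityMeasure P] (hM1 : CascadeM1 P X X₀)
    (hfin : entropyX P X₀ ≠ ∞) :
    ∫ z, Real.log z ∂(sizeBiasedLaw P X₀) = (entropyX P X₀).toReal := by
  rw [sizeBiasedLaw, integral_withDensity_eq_integral_toReal_smul ENNReal.measurable_ofReal
    (ae_of_all _ fun _ => ENNReal.ofReal_lt_top),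
    integral_map hM1.meas₀.aemeasurable (by fun_prop), ← integral_mul_log_X₀ hM1 hfin]
  simp [ENNReal.toReal_ofReal (hM1.nonneg₀ _)]

end SizeBiased

/-! ### The law of large numbers for the density along a typical sequence -/

section LawOfLargeNumbers

lemma ae_tendsto_average_infinitePi {α : Type*} [MeasurableSpace α] {ρ : Measure α}
    [IsProbabilityMeasure ρ] {f : α → ℝ} (hf : Measurable f) (hint : Integrable f ρ) :
    ∀ᵐ z ∂(Measure.infinitePi fun _ : ℕ => ρ),
      Tendsto (fun n : ℕ => (∑ i ∈ Finset.range n, f (z i)) / n) atTop (nhds (∫ a, f a ∂ρ)) := by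
  set π := Measure.infinitePi fun _ : ℕ => ρ
  have heval : ∀ i : ℕ, MeasurePreserving (Function.eval i) π ρ :=
    measurePreserving_eval_infinitePi fun _ : ℕ => ρ
  have hident : ∀ i : ℕ, IdentDistrib (fun z : ℕ → α => f (z i)) f π ρ := fun i =>
    ((heval i).hasLaw.identDistrib HasLaw.id).comp hf
  have hindep : iIndepFun (fun (i : ℕ) (z : ℕ → α) => f (z i)) π :=
    iIndepFun_infinitePi (P := fun _ : ℕ => ρ) (X := fun _ => f) fun _ => hf
  have hslln := strong_law_ae_real (μ := π) (fun i (z : ℕ → α) => f (z i))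
    ((hident 0).integrable_iff.2 hint) (fun i j hij => hindep.indepFun hij)
    fun i => (hident i).trans (hident 0).symm
  rwa [(hident 0).integral_eq] at hslln

lemma ae_eventually_prod_mem_Icc_expRate {ρ : Measure ℝ} [IsProbabilityMeasure ρ]
    (hpos : ∀ᵐ z ∂ρ, 0 < z) (hlog : Integrable Real.log ρ) {ε : ℝ} (hε : 0 < ε) :
    ∀ᵐ z ∂(Measure.infinitePi fun _ : ℕ => ρ), ∀ᶠ n in atTop,
      ∏ i ∈ Finset.range n, ENNReal.ofReal (z i) ∈
        Icc (expRate (∫ y, Real.log y ∂ρ - ε) n) (expRate (∫ y, Real.log y ∂ρ + ε) n) := by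
  have hpos' : ∀ᵐ z ∂(Measure.infinitePi fun _ : ℕ => ρ), ∀ i, 0 < z i := ae_all_iff.2 fun i =>
    (measurePreserving_eval_infinitePi (fun _ : ℕ => ρ) i).quasiMeasurePreserving.ae hpos
  filter_upwards [ae_tendsto_average_infinitePi Real.measurable_log hlog, hpos'] with z hz hzpos
  filter_upwards [hz.eventually_lt_const (lt_add_of_pos_right _ hε),
    hz.eventually_const_lt (sub_lt_self _ hε), eventually_gt_atTop 0] with n hlt hgt hn
  have hn' : (0 : ℝ) < n := by exact_mod_cast hn
  have hprod : ∏ i ∈ Finset.range n, ENNReal.ofReal (z i)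
      = ENNReal.ofReal (Real.exp (∑ i ∈ Finset.range n, Real.log (z i))) := by
    rw [Real.exp_sum, ENNReal.ofReal_prod_of_nonneg fun _ _ => (Real.exp_pos _).le]
    exact Finset.prod_congr rfl fun i _ => by rw [Real.exp_log (hzpos i)]
  rw [div_lt_iff₀' hn'] at hlt
  rw [lt_div_iff₀' hn'] at hgt
  rw [hprod]
  exact ⟨ENNReal.ofReal_le_ofReal (Real.exp_le_exp.2 hgt.le),
    ENNReal.ofReal_le_ofReal (Real.exp_le_exp.2 hlt.le)⟩

variable {b : ℕ} {Ω : Type*} [MeasurableSpace Ω] {P : Measure Ω} {X : List (Fin b) → Ω → ℝ}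
  {X₀ : Ω → ℝ}

lemma map_weights_withDensity_cascadeDensity (hM1 : CascadeM1 P X X₀) (x : SymbSpace b) (m : ℕ) :
    (P.withDensity (cascadeDensity X m · x)).map (fun ω (i : Fin m) => X (wordPrefix x (i + 1)) ω)
      = Measure.pi fun _ : Fin m => sizeBiasedLaw P X₀ := by
  have := isProbabilityMeasure_sizeBiasedLaw hM1
  have hV : Measurable fun ω (i : Fin m) => X (wordPrefix x (i + 1)) ω :=
    measurable_pi_lambda _ fun i => hM1.meas _
  refine (Measure.pi_eq fun s hs => ?_).symm
  have hS : MeasurableSet (univ.pi s) := MeasurableSet.univ_pi hs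
  rw [Measure.map_apply hV hS, withDensity_apply _ (hV hS), ← lintegral_indicator (hV hS)]
  simp_rw [sizeBiasedLaw_apply hM1.meas₀ (hs _)]
  rw [← lintegral_prod_comp_weights hM1 (w := fun i : Fin m => wordPrefix x (i + 1))
    (fun i j h => Fin.ext (wordPrefix_succ_injective x h)) (fun i => wordPrefix_succ_ne_nil x i)
    fun i => ENNReal.measurable_ofReal.indicator (hs i)]
  refine lintegral_congr fun ω => ?_
  by_cases hω : ∀ i : Fin m, X (wordPrefix x (i + 1)) ω ∈ s i
  · rw [indicator_of_mem (by simpa using hω), cascadeDensity_eq_prod hM1.nonneg,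
      Finset.prod_range]
    exact Finset.prod_congr rfl fun i _ => (indicator_of_mem (hω i) _).symm
  · rw [indicator_of_notMem (by simpa using hω)]
    obtain ⟨i, hi⟩ := not_forall.1 hω
    exact (Finset.prod_eq_zero (Finset.mem_univ i) (indicator_of_notMem hi _)).symm

lemma withDensity_cascadeDensity_preimage_weights (hM1 : CascadeM1 P X X₀) (x : SymbSpace b)
    (m : ℕ) {S : Set (Fin m → ℝ)} (hS : MeasurableSet S) :
    P.withDensity (cascadeDensity X m · x) {ω | (fun i : Fin m => X (wordPrefix x (i + 1)) ω) ∈ S}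
      = (Measure.infinitePi fun _ : ℕ => sizeBiasedLaw P X₀) {z | (fun i : Fin m => z i) ∈ S} := by
  have := isProbabilityMeasure_sizeBiasedLaw hM1
  calc P.withDensity (cascadeDensity X m · x)
        {ω | (fun i : Fin m => X (wordPrefix x (i + 1)) ω) ∈ S}
      = (Measure.pi fun _ : Fin m => sizeBiasedLaw P X₀) S := by
        rw [← map_weights_withDensity_cascadeDensity hM1 x m,
          Measure.map_apply (measurable_pi_lambda _ fun i => hM1.meas _) hS]
        rfl
    _ = (Measure.infinitePi fun _ : ℕ => sizeBiasedLaw P X₀) {z | (fun i : Fin m => z i) ∈ S} := by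
        rw [← Measure.infinitePi_eq_pi, ← Measure.map_infinitePi_infinitePi_of_inj
          (P := fun _ : ℕ => sizeBiasedLaw P X₀) (f := fun i : Fin m => (i : ℕ))
          Fin.val_injective, Measure.map_apply (by fun_prop) hS]
        rfl

lemma prod_fin_filter_lt {M : Type*} [CommMonoid M] {n m : ℕ} (h : n ≤ m) (f : ℕ → M) :
    ∏ i ∈ Finset.univ.filter fun i : Fin m => (i : ℕ) < n, f i = ∏ i ∈ Finset.range n, f i := by
  rw [Finset.prod_filter, ← Finset.prod_range fun i => if i < n then f i else 1,
    ← Finset.prod_filter]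
  refine Finset.prod_congr ?_ fun _ _ => rfl
  ext i
  simp only [Finset.mem_filter, Finset.mem_range]
  omega

lemma withDensity_cascadeDensity_biUnion_le (hM1 : CascadeM1 P X X₀) (x : SymbSpace b)
    {I : ℕ → Set ℝ≥0∞} (hI : ∀ n, MeasurableSet (I n)) (M m : ℕ) :
    P.withDensity (cascadeDensity X m · x) {ω | ∃ n ∈ Icc M m, cascadeDensity X n ω x ∉ I n}
      ≤ (Measure.infinitePi fun _ : ℕ => sizeBiasedLaw P X₀)
          (⋃ n ∈ Ici M, {z | ∏ i ∈ Finset.range n, ENNReal.ofReal (z i) ∉ I n}) := by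
  let S : Set (Fin m → ℝ) :=
    ⋃ n ∈ Icc M m,
      {v | ∏ i ∈ Finset.univ.filter fun i : Fin m => (i : ℕ) < n, ENNReal.ofReal (v i) ∉ I n}
  have hS : MeasurableSet S := MeasurableSet.biUnion (to_countable _) fun n _ =>
    (Finset.measurable_prod _ fun i _ => (measurable_pi_apply i).ennreal_ofReal) (hI n).compl
  have hmem : ∀ z : ℕ → ℝ, (fun i : Fin m => z i) ∈ S ↔
      ∃ n ∈ Icc M m, ∏ i ∈ Finset.range n, ENNReal.ofReal (z i) ∉ I n := fun z => by
    simp only [S, mem_iUnion, exists_prop, mem_ofPred_eq]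
    refine exists_congr fun n => and_congr_right fun hn => ?_
    rw [prod_fin_filter_lt hn.2 fun i => ENNReal.ofReal (z i)]
  have hset : {ω | ∃ n ∈ Icc M m, cascadeDensity X n ω x ∉ I n}
      = {ω | (fun i : Fin m => X (wordPrefix x (i + 1)) ω) ∈ S} := by
    ext ω
    simp only [mem_ofPred_eq, cascadeDensity_eq_prod hM1.nonneg]
    exact (hmem fun i => X (wordPrefix x (i + 1)) ω).symm
  rw [hset, withDensity_cascadeDensity_preimage_weights hM1 x m hS]
  refine measure_mono fun z hz => ?_
  obtain ⟨n, hn, hzn⟩ := (hmem z).1 hz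
  exact mem_biUnion (mem_Ici.2 hn.1) hzn

lemma isRare_cascadeDensity_notMem [SFinite P] (hM1 : CascadeM1 P X X₀)
    {ν : Measure (SymbSpace b)} [IsFiniteMeasure ν] {I : ℕ → Set ℝ≥0∞}
    (hI : ∀ n, MeasurableSet (I n))
    (h : ∀ᵐ z ∂(Measure.infinitePi fun _ : ℕ => sizeBiasedLaw P X₀),
      ∀ᶠ n in atTop, ∏ i ∈ Finset.range n, ENNReal.ofReal (z i) ∈ I n) :
    IsRare P X ν fun _ n => {p | cascadeDensity X n p.1 p.2 ∉ I n} := by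
  have := isProbabilityMeasure_sizeBiasedLaw hM1
  let D : ℕ → Set (ℕ → ℝ) := fun n => {z | ∏ i ∈ Finset.range n, ENNReal.ofReal (z i) ∉ I n}
  have hD : ∀ n, MeasurableSet (D n) := fun n =>
    (Finset.measurable_prod _ fun i _ => (measurable_pi_apply i).ennreal_ofReal) (hI n).compl
  have htail := tendsto_measure_biUnion_Ici_of_ae_eventually_notMem hD
    (h.mono fun z hz => hz.mono fun n => not_not.2)
  refine isRare_of_tailMass_le (u := fun M => (Measure.infinitePi fun _ : ℕ => sizeBiasedLaw P X₀)
    (⋃ n ∈ Ici M, D n) * ν univ) ?_ fun M => iSup_le fun m => ?_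
  · simpa using ENNReal.Tendsto.mul_const htail (Or.inr (measure_ne_top ν univ))
  have hmeas : MeasurableSet
      (⋃ n ∈ Icc M m, {p : Ω × SymbSpace b | cascadeDensity X n p.1 p.2 ∉ I n}) :=
    MeasurableSet.biUnion (to_countable _) fun n _ =>
      measurable_cascadeDensity hM1.meas n (hI n).compl
  rw [peyriereMeasure_apply_symm hM1.meas m hmeas, ← lintegral_const]
  refine lintegral_mono fun x => ?_
  convert withDensity_cascadeDensity_biUnion_le hM1 x hI M m using 2
  ext ω
  simp

lemma isRare_cascadeDensity_notMem_Icc_expRate [IsProbabilityMeasure P] (hM1 : CascadeM1 P X X₀)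
    (hfin : entropyX P X₀ ≠ ∞) (ν : Measure (SymbSpace b)) [IsFiniteMeasure ν]
    {ε : ℝ} (hε : 0 < ε) :
    IsRare P X ν fun _ n => {p | cascadeDensity X n p.1 p.2 ∉
      Icc (expRate ((entropyX P X₀).toReal - ε) n) (expRate ((entropyX P X₀).toReal + ε) n)} := by
  have := isProbabilityMeasure_sizeBiasedLaw hM1
  refine isRare_cascadeDensity_notMem hM1 (fun _ => measurableSet_Icc) ?_
  rw [← integral_log_sizeBiasedLaw hM1 hfin]
  exact ae_eventually_prod_mem_Icc_expRate (ae_pos_sizeBiasedLaw hM1.meas₀)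
    (integrable_log_sizeBiasedLaw hM1 hfin) hε

end LawOfLargeNumbers

/-! ### Cylinders light for the limit -/

section Light

variable {b : ℕ} {Ω : Type*} [MeasurableSpace Ω] {P : Measure Ω} {X : List (Fin b) → Ω → ℝ}
  {X₀ : Ω → ℝ} {ν : Measure (SymbSpace b)} {Qν : Ω → Measure (SymbSpace b)}

lemma peyriereMeasure_setOf_cascadeMeasure_le_mul_le [SFinite P] [SFinite ν]
    (hM1 : CascadeM1 P X X₀) (s : ℝ≥0∞) (m n : ℕ) :
    peyriereMeasure P X ν m {p | cascadeMeasure X ν m p.1 (cylinder (wordPrefix p.2 n))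
      ≤ s * cascadeMeasure X ν n p.1 (cylinder (wordPrefix p.2 n))} ≤ s * ν univ := by
  have hmeas : ∀ k, Measurable fun p : Ω × SymbSpace b =>
      cascadeMeasure X ν k p.1 (cylinder (wordPrefix p.2 n)) := fun k =>
    measurable_comp_wordPrefix (f := fun ω w => cascadeMeasure X ν k ω (cylinder w))
      (measurable_cascadeMeasure_cylinder hM1.meas k) n
  have huniv : Measurable fun ω => cascadeMeasure X ν n ω univ :=
    measurable_cascadeMeasure_apply hM1.meas n (A := univ) MeasurableSet.univ
  calc _ = ∫⁻ ω, cascadeMeasure X ν m ω {x | cascadeMeasure X ν m ω (cylinder (wordPrefix x n))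
        ≤ s * cascadeMeasure X ν n ω (cylinder (wordPrefix x n))} ∂P :=
        peyriereMeasure_apply hM1.meas m (measurableSet_le (hmeas m) ((hmeas n).const_mul s))
    _ ≤ ∫⁻ ω, s * cascadeMeasure X ν n ω univ ∂P :=
        lintegral_mono fun ω => measure_setOf_cylinder_le_mul_le _ _ s n
    _ = s * ν univ := by
        rw [lintegral_const_mul s huniv, lintegral_cascadeMeasure_univ hM1 ν n]

lemma isRare_cascadeMeasure_cylinder_le [SFinite P] [IsFiniteMeasure ν] (hM1 : CascadeM1 P X X₀)
    {ε : ℝ} (hε : 0 < ε) :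
    IsRare P X ν fun m n => {p | cascadeMeasure X ν m p.1 (cylinder (wordPrefix p.2 n))
      ≤ expRate (-ε) n * cascadeMeasure X ν n p.1 (cylinder (wordPrefix p.2 n))} := by
  refine isRare_of_tsum_ne_top (c := fun n => expRate (-ε) n * ν univ) ?_ fun m n _ =>
    peyriereMeasure_setOf_cascadeMeasure_le_mul_le hM1 _ m n
  rw [ENNReal.tsum_mul_right]
  exact ENNReal.mul_ne_top (tsum_expRate_ne_top (by linarith)) (measure_ne_top ν univ)

lemma ae_ae_eventually_expRate_mul_cascadeMeasure_le [SFinite P] [IsFiniteMeasure ν]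
    (hM1 : CascadeM1 P X X₀) (hQν : IsCascadeLimit P X ν Qν) {ε : ℝ} (hε : 0 < ε) :
    ∀ᵐ ω ∂P, ∀ᵐ x ∂(Qν ω), ∀ᶠ n in atTop,
      expRate (-ε) n * cascadeMeasure X ν n ω (cylinder (wordPrefix x n))
        ≤ Qν ω (cylinder (wordPrefix x n)) := by
  simp only [← not_lt]
  refine (isRare_cascadeMeasure_cylinder_le hM1 hε).ae_ae_eventually_not hM1.meas hQν
    (R := fun m n ω w => cascadeMeasure X ν m ω (cylinder w)
      ≤ expRate (-ε) n * cascadeMeasure X ν n ω (cylinder w))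
    (R' := fun n ω w => Qν ω (cylinder w) < expRate (-ε) n * cascadeMeasure X ν n ω (cylinder w))
    (fun m n w => measurableSet_le (measurable_cascadeMeasure_cylinder hM1.meas m w)
      ((measurable_cascadeMeasure_cylinder hM1.meas n w).const_mul _)) ?_
  filter_upwards [hQν] with ω hω n w hlt
  exact (hω w).eventually_le_const hlt

lemma ae_ae_eventually_cascadeDensity_mem_Icc [IsProbabilityMeasure P] [IsFiniteMeasure ν]
    (hM1 : CascadeM1 P X X₀) (hfin : entropyX P X₀ ≠ ∞) (hQν : IsCascadeLimit P X ν Qν)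
    {ε : ℝ} (hε : 0 < ε) :
    ∀ᵐ ω ∂P, ∀ᵐ x ∂(Qν ω), ∀ᶠ n in atTop, cascadeDensity X n ω x ∈
      Icc (expRate ((entropyX P X₀).toReal - ε) n) (expRate ((entropyX P X₀).toReal + ε) n) := by
  let R : ℕ → Ω → List (Fin b) → Prop := fun n ω w => ENNReal.ofReal (cascadeY X w ω) ∉
    Icc (expRate ((entropyX P X₀).toReal - ε) n) (expRate ((entropyX P X₀).toReal + ε) n)
  have h := (isRare_cascadeDensity_notMem_Icc_expRate hM1 hfin ν hε).ae_ae_eventually_not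
    hM1.meas hQν (R := fun _ => R) (R' := R)
    (fun _ n w => ((measurable_cascadeY hM1.meas w).ennreal_ofReal measurableSet_Icc).compl)
    (ae_of_all _ fun _ _ _ h => Eventually.of_forall fun _ => h)
  filter_upwards [h] with ω hω
  filter_upwards [hω] with x hx
  exact hx.mono fun n => not_not.1

lemma ae_ae_eventually_wordPrefix_of_ae [SFinite P] [IsFiniteMeasure ν]
    (hM1 : CascadeM1 P X X₀) (hQν : IsCascadeLimit P X ν Qν) {G : ℕ → List (Fin b) → Prop}
    (hG : ∀ᵐ x ∂ν, ∀ᶠ n in atTop, G n (wordPrefix x n)) :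
    ∀ᵐ ω ∂P, ∀ᵐ x ∂(Qν ω), ∀ᶠ n in atTop, G n (wordPrefix x n) := by
  have hD : ∀ n, MeasurableSet {x : SymbSpace b | ¬ G n (wordPrefix x n)} := fun n => by
    rw [measurableSet_setOfPred]
    exact measurable_of_wordPrefix (fun w => ¬ G n w) n
  have h := (isRare_preimage_snd hM1 hD (by simpa using hG)).ae_ae_eventually_not
    hM1.meas hQν (R := fun _ n _ w => ¬ G n w) (R' := fun n _ w => ¬ G n w)
    (fun _ _ _ => MeasurableSet.const _)
    (ae_of_all _ fun _ _ _ h => Eventually.of_forall fun _ => h)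
  simpa using h

lemma ae_ae_eventually_expRate_mul_le [IsProbabilityMeasure P] [IsFiniteMeasure ν]
    (hM1 : CascadeM1 P X X₀) (hfin : entropyX P X₀ ≠ ∞) (hQν : IsCascadeLimit P X ν Qν)
    {c : ℝ} (hc : c < (entropyX P X₀).toReal) :
    ∀ᵐ ω ∂P, ∀ᵐ x ∂(Qν ω), ∀ᶠ n in atTop,
      expRate c n * ν (cylinder (wordPrefix x n)) ≤ Qν ω (cylinder (wordPrefix x n)) := by
  have hε : 0 < ((entropyX P X₀).toReal - c) / 2 := by linarith
  filter_upwards [ae_ae_eventually_expRate_mul_cascadeMeasure_le hM1 hQν hε,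
    ae_ae_eventually_cascadeDensity_mem_Icc hM1 hfin hQν hε] with ω hω hω'
  filter_upwards [hω, hω'] with x hx hx'
  filter_upwards [hx, hx'] with n hn hn'
  refine le_trans ?_ hn
  rw [cascadeMeasure_cylinder_wordPrefix, ← mul_assoc]
  gcongr
  calc expRate c n = expRate (-(((entropyX P X₀).toReal - c) / 2)) n
        * expRate ((entropyX P X₀).toReal - ((entropyX P X₀).toReal - c) / 2) n := by
        rw [expRate_mul_expRate]
        ring_nf
    _ ≤ _ := by
        gcongr
        exact hn'.1

end Light

/-! ### Correlations of the cascade density -/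

section Correlation

lemma exists_mem_Icc_wordPrefix_eq_forall_ne {b : ℕ} {x y : SymbSpace b} {n m : ℕ} (hnm : n ≤ m)
    (h : wordPrefix x n = wordPrefix y n) :
    ∃ k ∈ Icc n m, wordPrefix x k = wordPrefix y k ∧
      ∀ j ∈ Ioc k m, wordPrefix x j ≠ wordPrefix y j := by
  classical
  let p : ℕ → Prop := fun j => wordPrefix x j = wordPrefix y j
  exact ⟨Nat.findGreatest p m, ⟨Nat.le_findGreatest hnm h, Nat.findGreatest_le m⟩,
    Nat.findGreatest_spec (P := p) hnm h,
    fun j hj => Nat.findGreatest_is_greatest (P := p) hj.1 hj.2⟩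

variable {b : ℕ} {Ω : Type*} [MeasurableSpace Ω] {P : Measure Ω} {X : List (Fin b) → Ω → ℝ}
  {X₀ : Ω → ℝ}

lemma lintegral_prod_mul_cascadeDensity (hM1 : CascadeM1 P X X₀) {x y : SymbSpace b} {k m : ℕ}
    (hne : ∀ j ∈ Ioc k m, wordPrefix x j ≠ wordPrefix y j) :
    ∫⁻ ω, (∏ j ∈ Finset.Ico k m, ENNReal.ofReal (X (wordPrefix x (j + 1)) ω))
      * cascadeDensity X m ω y ∂P = 1 := by
  classical
  let S := (Finset.Ico k m).image fun j => wordPrefix x (j + 1)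
  let T := (Finset.range m).image fun j => wordPrefix y (j + 1)
  have hdisj : Disjoint S T := by
    simp only [S, T, Finset.disjoint_left, Finset.mem_image, not_exists, not_and]
    rintro _ ⟨i, hi, rfl⟩ j - h
    have hji : j = i := by simpa using congrArg List.length h
    rw [Finset.mem_Ico] at hi
    exact hne (i + 1) ⟨by omega, by omega⟩ (by rw [← h, hji])
  rw [← lintegral_prod_ofReal_weights hM1 (S := S ∪ T) (by simp [S, T, wordPrefix_succ_ne_nil])]
  refine lintegral_congr fun ω => ?_
  rw [Finset.prod_union hdisj, Finset.prod_image (wordPrefix_succ_injective x).injOn,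
    Finset.prod_image (wordPrefix_succ_injective y).injOn, cascadeDensity_eq_prod hM1.nonneg]

lemma lintegral_mul_le_of_le_cascadeDensity (hM1 : CascadeM1 P X X₀) {x y : SymbSpace b}
    {k m : ℕ} (hkm : k ≤ m) (hne : ∀ j ∈ Ioc k m, wordPrefix x j ≠ wordPrefix y j)
    {g g' : Ω → ℝ≥0∞} {K : ℝ≥0∞} (hg : ∀ ω, g ω ≤ cascadeDensity X m ω x)
    (hgK : ∀ ω, g ω ≠ 0 → cascadeDensity X k ω x ≤ K) (hg' : ∀ ω, g' ω ≤ cascadeDensity X m ω y) :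
    ∫⁻ ω, g ω * g' ω ∂P ≤ K := by
  have hy : Measurable fun ω => cascadeDensity X m ω y :=
    (measurable_cascadeY hM1.meas _).ennreal_ofReal
  have hmeas : Measurable fun ω =>
      (∏ j ∈ Finset.Ico k m, ENNReal.ofReal (X (wordPrefix x (j + 1)) ω))
        * cascadeDensity X m ω y :=
    (Finset.measurable_prod _ fun j _ => (hM1.meas _).ennreal_ofReal).mul hy
  calc ∫⁻ ω, g ω * g' ω ∂P
      ≤ ∫⁻ ω, K * ((∏ j ∈ Finset.Ico k m, ENNReal.ofReal (X (wordPrefix x (j + 1)) ω))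
          * cascadeDensity X m ω y) ∂P := by
        refine lintegral_mono fun ω => ?_
        rcases eq_or_ne (g ω) 0 with h0 | h0
        · simp [h0]
        rw [← mul_assoc]
        refine mul_le_mul' ((hg ω).trans ?_) (hg' ω)
        rw [cascadeDensity_eq_prod hM1.nonneg m, ← Finset.prod_range_mul_prod_Ico _ hkm,
          ← cascadeDensity_eq_prod hM1.nonneg k]
        gcongr
        exact hgK ω h0
    _ = K := by
        rw [lintegral_const_mul K hmeas, lintegral_prod_mul_cascadeDensity hM1 hne, mul_one]

end Correlation

/-! ### Energy of a random measure -/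

section Energy

variable {b : ℕ} {Ω : Type*} [MeasurableSpace Ω] {P : Measure Ω} {ν : Measure (SymbSpace b)}

/-- The `n`-th level energy `∫ γ([x|_n]) dγ(x)`, the `γ ⊗ γ`-mass of the pairs of sequences with a
common prefix of length `n`. -/
def cylinderEnergy (γ : Measure (SymbSpace b)) (n : ℕ) : ℝ≥0∞ :=
  ∫⁻ x, γ (cylinder (wordPrefix x n)) ∂γ

lemma measure_setOf_lt_measure_cylinder_le (γ μ : Measure (SymbSpace b)) {r s : ℝ≥0∞}
    (hr : r ≠ 0) (hr' : r ≠ ∞) (hs : s ≠ 0) (hs' : s ≠ ∞) (n : ℕ) :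
    γ {x | s < μ (cylinder (wordPrefix x n))} ≤ r * μ univ + cylinderEnergy γ n / (r * s) := by
  calc γ {x | s < μ (cylinder (wordPrefix x n))}
      ≤ γ ({x | γ (cylinder (wordPrefix x n)) ≤ r * μ (cylinder (wordPrefix x n))}
          ∪ {x | r * s ≤ γ (cylinder (wordPrefix x n))}) := by
        refine measure_mono fun x (hx : s < _) => ?_
        refine (le_total (γ (cylinder (wordPrefix x n)))
          (r * μ (cylinder (wordPrefix x n)))).imp id fun h => le_trans ?_ h
        gcongr
    _ ≤ _ := (measure_union_le _ _).trans
        (add_le_add (measure_setOf_cylinder_le_mul_le γ μ r n) (meas_ge_le_lintegral_div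
          (measurable_of_wordPrefix (fun w => γ (cylinder w)) n).aemeasurable
          (mul_ne_zero hr hs) (ENNReal.mul_ne_top hr' hs')))

lemma lintegral_cylinderEnergy_withDensity [SFinite P] [SFinite ν] {g : Ω × SymbSpace b → ℝ≥0∞}
    (hg : Measurable g) (n : ℕ) :
    ∫⁻ ω, cylinderEnergy (ν.withDensity fun x => g (ω, x)) n ∂P
      = ∫⁻ x, ∫⁻ y in cylinder (wordPrefix x n), ∫⁻ ω, g (ω, x) * g (ω, y) ∂P ∂ν ∂ν := by
  have hgω : ∀ ω, Measurable fun x => g (ω, x) := fun ω => hg.comp measurable_prodMk_left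
  have hgx : ∀ x, Measurable fun ω => g (ω, x) := fun x => hg.comp measurable_prodMk_right
  have hmass : Measurable fun p : Ω × SymbSpace b =>
      ∫⁻ y in cylinder (wordPrefix p.2 n), g (p.1, y) ∂ν :=
    measurable_comp_wordPrefix (f := fun ω w => ∫⁻ y in cylinder w, g (ω, y) ∂ν)
      (fun w => hg.lintegral_prod_right') n
  calc ∫⁻ ω, cylinderEnergy (ν.withDensity fun x => g (ω, x)) n ∂P
      = ∫⁻ ω, ∫⁻ x, g (ω, x) * ∫⁻ y in cylinder (wordPrefix x n), g (ω, y) ∂ν ∂ν ∂P := by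
        refine lintegral_congr fun ω => ?_
        rw [cylinderEnergy, lintegral_withDensity_eq_lintegral_mul ν (hgω ω)
          (measurable_of_wordPrefix (fun w => (ν.withDensity fun x => g (ω, x)) (cylinder w)) n)]
        refine lintegral_congr fun x => ?_
        rw [Pi.mul_apply, withDensity_apply _ (measurableSet_cylinder _)]
    _ = ∫⁻ x, ∫⁻ ω, g (ω, x) * ∫⁻ y in cylinder (wordPrefix x n), g (ω, y) ∂ν ∂P ∂ν :=
        lintegral_lintegral_swap (hg.mul hmass).aemeasurable
    _ = ∫⁻ x, ∫⁻ ω, ∫⁻ y in cylinder (wordPrefix x n), g (ω, x) * g (ω, y) ∂ν ∂P ∂ν := by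
        simp_rw [lintegral_const_mul _ (hgω _)]
    _ = _ := lintegral_congr fun x => lintegral_lintegral_swap
        (((hgx x).comp measurable_fst).mul hg).aemeasurable

end Energy

/-! ### Cylinders heavy for the limit -/

section Heavy

variable {b : ℕ} {Ω : Type*} [MeasurableSpace Ω] {P : Measure Ω} {X : List (Fin b) → Ω → ℝ}
  {X₀ : Ω → ℝ} {ν : Measure (SymbSpace b)} {Qν : Ω → Measure (SymbSpace b)} {a c t : ℝ}

/-- The pairs `(ω, x)` for which, at all levels `n ≤ k ≤ m`, the density `Q_k` is at most `e^{ka}`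
and the `ν`-mass of `[x|_k]` is at most `e^{-kt}`. The cascade may have no second moment, but its
restriction to this set does. -/
def temperedSet (X : List (Fin b) → Ω → ℝ) (ν : Measure (SymbSpace b)) (a t : ℝ) (n m : ℕ) :
    Set (Ω × SymbSpace b) :=
  {p | ∀ k ∈ Icc n m, cascadeDensity X k p.1 p.2 ≤ expRate a k ∧
    ν (cylinder (wordPrefix p.2 k)) ≤ expRate (-t) k}

/-- The density of the `m`-th cascade measure, truncated to the tempered set. -/
def temperedDensity (X : List (Fin b) → Ω → ℝ) (ν : Measure (SymbSpace b)) (a t : ℝ) (n m : ℕ) :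
    Ω × SymbSpace b → ℝ≥0∞ :=
  (temperedSet X ν a t n m).indicator fun p => cascadeDensity X m p.1 p.2

lemma measurableSet_temperedSet (hX : ∀ w, Measurable (X w)) (n m : ℕ) :
    MeasurableSet (temperedSet X ν a t n m) := by
  have h : temperedSet X ν a t n m = ⋂ k ∈ Icc n m,
      {p | cascadeDensity X k p.1 p.2 ≤ expRate a k} ∩
        {p | ν (cylinder (wordPrefix p.2 k)) ≤ expRate (-t) k} := by
    ext p
    simp [temperedSet]
  rw [h]
  exact MeasurableSet.biInter (to_countable _) fun k _ =>
    (measurableSet_le (measurable_cascadeDensity hX k) measurable_const).inter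
      (measurableSet_le ((measurable_of_wordPrefix (fun w => ν (cylinder w)) k).comp measurable_snd)
        measurable_const)

lemma measurable_temperedDensity (hX : ∀ w, Measurable (X w)) (n m : ℕ) :
    Measurable (temperedDensity X ν a t n m) :=
  (measurable_cascadeDensity hX m).indicator (measurableSet_temperedSet hX n m)

lemma lintegral_temperedDensity_mul_le (hM1 : CascadeM1 P X X₀) {x y : SymbSpace b} {n m : ℕ}
    (hnm : n ≤ m) (hxy : wordPrefix x n = wordPrefix y n) :
    ∫⁻ ω, temperedDensity X ν a t n m (ω, x) * temperedDensity X ν a t n m (ω, y) ∂P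
      ≤ ∑ k ∈ Finset.Icc n m, (cylinder (wordPrefix x k)).indicator
          (fun _ => if ν (cylinder (wordPrefix x k)) ≤ expRate (-t) k then expRate a k else 0)
          y := by
  obtain ⟨k, hk, hkeq, hne⟩ := exists_mem_Icc_wordPrefix_eq_forall_ne hnm hxy
  refine le_trans ?_ (Finset.single_le_sum (fun _ _ => zero_le) (Finset.mem_Icc.2 hk))
  rw [indicator_of_mem (mem_cylinder_wordPrefix_iff.2 hkeq.symm)]
  have htempered : ∀ ω, temperedDensity X ν a t n m (ω, x) ≠ 0 →
      cascadeDensity X k ω x ≤ expRate a k ∧ ν (cylinder (wordPrefix x k)) ≤ expRate (-t) k :=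
    fun ω h => mem_of_indicator_ne_zero h k hk
  refine lintegral_mul_le_of_le_cascadeDensity hM1 hk.2 hne (fun ω => indicator_le_self _ _ _)
    (fun ω h => ?_) fun ω => indicator_le_self _ _ _
  rw [if_pos (htempered ω h).2]
  exact (htempered ω h).1

lemma lintegral_cylinderEnergy_temperedDensity_le [SFinite P] [SFinite ν]
    (hM1 : CascadeM1 P X X₀) {n m : ℕ} (hnm : n ≤ m) :
    ∫⁻ ω, cylinderEnergy (ν.withDensity fun x => temperedDensity X ν a t n m (ω, x)) n ∂P
      ≤ expRate (a - t) n * (∑' j, expRate (a - t) j) * ν univ := by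
  let K : SymbSpace b → ℕ → ℝ≥0∞ := fun x k =>
    if ν (cylinder (wordPrefix x k)) ≤ expRate (-t) k then expRate a k else 0
  have hK : ∀ x k, K x k * ν (cylinder (wordPrefix x k)) ≤ expRate (a - t) k := fun x k => by
    simp only [K]
    split_ifs with hk
    · rw [sub_eq_add_neg, ← expRate_mul_expRate]
      gcongr
    · simp
  rw [lintegral_cylinderEnergy_withDensity (measurable_temperedDensity hM1.meas n m),
    ← lintegral_const]
  refine lintegral_mono fun x => ?_
  calc ∫⁻ y in cylinder (wordPrefix x n), ∫⁻ ω,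
        temperedDensity X ν a t n m (ω, x) * temperedDensity X ν a t n m (ω, y) ∂P ∂ν
      ≤ ∫⁻ y in cylinder (wordPrefix x n), ∑ k ∈ Finset.Icc n m,
          (cylinder (wordPrefix x k)).indicator (fun _ => K x k) y ∂ν :=
        setLIntegral_mono' (measurableSet_cylinder _) fun y hy =>
          lintegral_temperedDensity_mul_le hM1 hnm (mem_cylinder_wordPrefix_iff.1 hy).symm
    _ ≤ ∫⁻ y, ∑ k ∈ Finset.Icc n m,
          (cylinder (wordPrefix x k)).indicator (fun _ => K x k) y ∂ν :=
        setLIntegral_le_lintegral _ _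
    _ = ∑ k ∈ Finset.Icc n m, K x k * ν (cylinder (wordPrefix x k)) := by
        rw [lintegral_finsetSum _ fun k _ =>
          measurable_const.indicator (measurableSet_cylinder _)]
        simp_rw [lintegral_indicator_const (measurableSet_cylinder _)]
    _ ≤ ∑ k ∈ Finset.Icc n m, expRate (a - t) k := Finset.sum_le_sum fun k _ => hK x k
    _ ≤ expRate (a - t) n * ∑' j, expRate (a - t) j := sum_Icc_expRate_le _ n m

/-- The pairs `(ω, x)` for which the mass of `[x|_n]` under the `m`-th cascade measure exceeds
`e^{-nc}`. -/
def heavySet (X : List (Fin b) → Ω → ℝ) (ν : Measure (SymbSpace b)) (c : ℝ) (m n : ℕ) :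
    Set (Ω × SymbSpace b) :=
  {p | expRate (-c) n < cascadeMeasure X ν m p.1 (cylinder (wordPrefix p.2 n))}

lemma measurableSet_heavySet [SFinite ν] (hX : ∀ w, Measurable (X w)) (m n : ℕ) :
    MeasurableSet (heavySet X ν c m n) :=
  measurableSet_lt measurable_const
    (measurable_comp_wordPrefix (f := fun ω w => cascadeMeasure X ν m ω (cylinder w))
      (measurable_cascadeMeasure_cylinder hX m) n)

lemma cascadeMeasure_apply_inter_temperedSet (hX : ∀ w, Measurable (X w))
    (ν : Measure (SymbSpace b)) {A : Set (Ω × SymbSpace b)} (hA : MeasurableSet A) (n m : ℕ)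
    (ω : Ω) :
    cascadeMeasure X ν m ω (Prod.mk ω ⁻¹' (A ∩ temperedSet X ν a t n m))
      = (ν.withDensity fun x => temperedDensity X ν a t n m (ω, x)) (Prod.mk ω ⁻¹' A) := by
  have hT := measurable_prodMk_left (x := ω) (measurableSet_temperedSet (a := a) (t := t)
    (ν := ν) hX n m)
  have hdens : (fun x => temperedDensity X ν a t n m (ω, x))
      = (Prod.mk ω ⁻¹' temperedSet X ν a t n m).indicator (cascadeDensity X m ω) := rfl
  rw [hdens, withDensity_indicator hT, ← restrict_withDensity hT,
    Measure.restrict_apply (measurable_prodMk_left hA)]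
  rfl

lemma peyriereMeasure_heavySet_inter_temperedSet_le [SFinite P] [SFinite ν]
    (hM1 : CascadeM1 P X X₀) {ε : ℝ} {n m : ℕ} (hnm : n ≤ m) :
    peyriereMeasure P X ν m (heavySet X ν c m n ∩ temperedSet X ν a t n m)
      ≤ expRate (-ε) n * ν univ
        + expRate (a - t + c + ε) n * ((∑' j, expRate (a - t) j) * ν univ) := by
  have hheavy := measurableSet_heavySet (ν := ν) (c := c) hM1.meas m n
  have huniv : Measurable fun ω => cascadeMeasure X ν m ω univ :=
    measurable_cascadeMeasure_apply hM1.meas m (A := univ) MeasurableSet.univ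
  have hdiv : ∀ z, z / (expRate (-ε) n * expRate (-c) n) = expRate (c + ε) n * z := fun z => by
    rw [expRate_mul_expRate, ← neg_add_rev, div_expRate_neg]
  calc peyriereMeasure P X ν m (heavySet X ν c m n ∩ temperedSet X ν a t n m)
      = ∫⁻ ω, (ν.withDensity fun x => temperedDensity X ν a t n m (ω, x))
          {x | expRate (-c) n < cascadeMeasure X ν m ω (cylinder (wordPrefix x n))} ∂P := by
        rw [peyriereMeasure_apply hM1.meas m
          (hheavy.inter (measurableSet_temperedSet hM1.meas n m))]
        exact lintegral_congr fun ω =>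
          cascadeMeasure_apply_inter_temperedSet hM1.meas ν hheavy n m ω
    _ ≤ ∫⁻ ω, (expRate (-ε) n * cascadeMeasure X ν m ω univ + expRate (c + ε) n *
          cylinderEnergy (ν.withDensity fun x => temperedDensity X ν a t n m (ω, x)) n) ∂P := by
        refine lintegral_mono fun ω => ?_
        rw [← hdiv]
        exact measure_setOf_lt_measure_cylinder_le _ _ (expRate_ne_zero _ _) (expRate_ne_top _ _)
          (expRate_ne_zero _ _) (expRate_ne_top _ _) n
    _ = expRate (-ε) n * ν univ + expRate (c + ε) n * ∫⁻ ω,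
          cylinderEnergy (ν.withDensity fun x => temperedDensity X ν a t n m (ω, x)) n ∂P := by
        rw [lintegral_add_left (huniv.const_mul _), lintegral_const_mul _ huniv,
          lintegral_cascadeMeasure_univ hM1, lintegral_const_mul' _ _ (expRate_ne_top _ _)]
    _ ≤ expRate (-ε) n * ν univ + expRate (c + ε) n *
          (expRate (a - t) n * (∑' j, expRate (a - t) j) * ν univ) := by
        gcongr
        exact lintegral_cylinderEnergy_temperedDensity_le hM1 hnm
    _ = _ := by
        rw [show a - t + c + ε = (c + ε) + (a - t) by ring, ← expRate_mul_expRate (c + ε) (a - t)]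
        ring

lemma isRare_heavySet_inter_temperedSet [SFinite P] [IsFiniteMeasure ν] (hM1 : CascadeM1 P X X₀)
    (hat : a < t) (hct : a + c < t) :
    IsRare P X ν fun m n => heavySet X ν c m n ∩ temperedSet X ν a t n m := by
  refine isRare_of_tsum_ne_top (c := fun n => expRate (-((t - a - c) / 2)) n * ν univ
    + expRate (a - t + c + (t - a - c) / 2) n * ((∑' j, expRate (a - t) j) * ν univ)) ?_
    fun m n hnm => peyriereMeasure_heavySet_inter_temperedSet_le hM1 hnm
  rw [ENNReal.tsum_add, ENNReal.tsum_mul_right, ENNReal.tsum_mul_right]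
  have hν := measure_ne_top ν univ
  exact ENNReal.add_ne_top.2
    ⟨ENNReal.mul_ne_top (tsum_expRate_ne_top (by linarith)) hν,
      ENNReal.mul_ne_top (tsum_expRate_ne_top (by linarith))
        (ENNReal.mul_ne_top (tsum_expRate_ne_top (by linarith)) hν)⟩

lemma isRare_heavySet [IsProbabilityMeasure P] [IsFiniteMeasure ν] (hM1 : CascadeM1 P X X₀)
    (hfin : entropyX P X₀ ≠ ∞) (hc : 0 ≤ c) (hct : (entropyX P X₀).toReal + c < t)
    (hν : ∀ᵐ x ∂ν, ∀ᶠ n in atTop, ν (cylinder (wordPrefix x n)) ≤ expRate (-t) n) :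
    IsRare P X ν (heavySet X ν c) := by
  obtain ⟨a, hha, hat⟩ := exists_between (lt_sub_iff_add_lt.2 hct)
  let B : ℕ → Set (SymbSpace b) := fun n => {x | ¬ ν (cylinder (wordPrefix x n)) ≤ expRate (-t) n}
  have hB : ∀ n, MeasurableSet (B n) := fun n => (measurableSet_le
    (measurable_of_wordPrefix (fun w => ν (cylinder w)) n) measurable_const).compl
  have hdev := isRare_cascadeDensity_notMem_Icc_expRate hM1 hfin ν (sub_pos.2 hha)
  have hmass_le := isRare_preimage_snd hM1 hB (by simpa [B] using hν)
  have htempered : IsRare P X ν fun m n => heavySet X ν c m n ∩ temperedSet X ν a t n m :=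
    isRare_heavySet_inter_temperedSet hM1 (by linarith) (by linarith)
  refine ((hdev.biUnion_Icc.union hmass_le.biUnion_Icc).union htempered).mono fun m n _ p hp => ?_
  by_cases hT : p ∈ temperedSet X ν a t n m
  · exact Or.inr ⟨hp, hT⟩
  simp only [temperedSet, mem_ofPred_eq, not_forall, not_and_or] at hT
  obtain ⟨k, hk, hdens | hmass⟩ := hT
  · refine Or.inl (Or.inl (mem_biUnion hk fun hmem => hdens (hmem.2.trans_eq ?_)))
    rw [add_sub_cancel]
  · exact Or.inl (Or.inr (mem_biUnion hk hmass))

lemma ae_ae_eventually_le_expRate [IsProbabilityMeasure P] [IsFiniteMeasure ν]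
    (hM1 : CascadeM1 P X X₀) (hfin : entropyX P X₀ ≠ ∞) (hQν : IsCascadeLimit P X ν Qν)
    (hc : 0 ≤ c) (hct : (entropyX P X₀).toReal + c < t)
    (hν : ∀ᵐ x ∂ν, ∀ᶠ n in atTop, ν (cylinder (wordPrefix x n)) ≤ expRate (-t) n) :
    ∀ᵐ ω ∂P, ∀ᵐ x ∂(Qν ω), ∀ᶠ n in atTop, Qν ω (cylinder (wordPrefix x n)) ≤ expRate (-c) n := by
  simp only [← not_lt]
  refine (isRare_heavySet hM1 hfin hc hct hν).ae_ae_eventually_not hM1.meas hQν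
    (R := fun m n ω w => expRate (-c) n < cascadeMeasure X ν m ω (cylinder w))
    (R' := fun n ω w => expRate (-c) n < Qν ω (cylinder w))
    (fun m n w => measurableSet_lt measurable_const
      (measurable_cascadeMeasure_cylinder hM1.meas m w)) ?_
  filter_upwards [hQν] with ω hω n w hlt
  exact (hω w).eventually_const_lt hlt

end Heavy

/-! ### Local dimensions and exponential bounds -/

section LocalDim

lemma le_expRate_neg_iff {z : ℝ≥0∞} (h0 : z ≠ 0) (htop : z ≠ ∞) {n : ℕ} (hn : 0 < n) {c : ℝ} :
    z ≤ expRate (-c) n ↔ c ≤ -Real.log z.toReal / n := by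
  rw [expRate, ENNReal.le_ofReal_iff_toReal_le htop (Real.exp_pos _).le,
    ← Real.log_le_iff_le_exp (ENNReal.toReal_pos h0 htop), le_div_iff₀' (by exact_mod_cast hn),
    mul_neg, le_neg]

lemma expRate_neg_le_iff {z : ℝ≥0∞} (h0 : z ≠ 0) (htop : z ≠ ∞) {n : ℕ} (hn : 0 < n) {c : ℝ} :
    expRate (-c) n ≤ z ↔ -Real.log z.toReal / n ≤ c := by
  rw [expRate, ENNReal.ofReal_le_iff_le_toReal htop,
    ← Real.le_log_iff_exp_le (ENNReal.toReal_pos h0 htop), div_le_iff₀' (by exact_mod_cast hn),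
    mul_neg, neg_le]

variable {b : ℕ} {μ : Measure (SymbSpace b)} {x : SymbSpace b} {c : ℝ}

lemma ofReal_le_lowerLocalDim (hpos : ∀ n, μ (cylinder (wordPrefix x n)) ≠ 0)
    (h : ∀ᶠ n in atTop, μ (cylinder (wordPrefix x n)) ≤ expRate (-c) n) :
    ENNReal.ofReal c ≤ lowerLocalDim μ x := by
  refine le_liminf_of_le (by isBoundedDefault) ?_
  filter_upwards [h, eventually_gt_atTop 0] with n hn hn0
  exact ENNReal.ofReal_le_ofReal
    ((le_expRate_neg_iff (hpos n) (ne_top_of_le_ne_top (expRate_ne_top _ _) hn) hn0).1 hn)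

lemma eventually_measure_cylinder_le_of_lt_lowerLocalDim [IsFiniteMeasure μ]
    (h : ENNReal.ofReal c < lowerLocalDim μ x) :
    ∀ᶠ n in atTop, μ (cylinder (wordPrefix x n)) ≤ expRate (-c) n := by
  filter_upwards [eventually_lt_of_lt_liminf h (by isBoundedDefault), eventually_gt_atTop 0]
    with n hn hn0
  rcases eq_or_ne (μ (cylinder (wordPrefix x n))) 0 with hzero | hzero
  · simp [hzero]
  · exact (le_expRate_neg_iff hzero (measure_ne_top μ _) hn0).2
      (ENNReal.ofReal_lt_ofReal_iff'.1 hn).1.le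

lemma upperLocalDim_le_ofReal
    (h : ∀ᶠ n in atTop, expRate (-c) n ≤ μ (cylinder (wordPrefix x n))) :
    upperLocalDim μ x ≤ ENNReal.ofReal c := by
  refine limsup_le_of_le (by isBoundedDefault) ?_
  filter_upwards [h, eventually_gt_atTop 0] with n hn hn0
  rcases eq_or_ne (μ (cylinder (wordPrefix x n))) ∞ with htop | htop
  · -- `(∞).toReal = 0` and `Real.log 0 = 0`
    simp [htop]
  · exact ENNReal.ofReal_le_ofReal
      ((expRate_neg_le_iff ((expRate_ne_zero _ _).bot_lt.trans_le hn).ne' htop hn0).1 hn)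

lemma eventually_le_measure_cylinder_of_upperLocalDim_lt [IsFiniteMeasure μ]
    (hpos : ∀ n, μ (cylinder (wordPrefix x n)) ≠ 0)
    (h : upperLocalDim μ x < ENNReal.ofReal c) :
    ∀ᶠ n in atTop, expRate (-c) n ≤ μ (cylinder (wordPrefix x n)) := by
  filter_upwards [eventually_lt_of_limsup_lt h (by isBoundedDefault), eventually_gt_atTop 0]
    with n hn hn0
  exact (expRate_neg_le_iff (hpos n) (measure_ne_top μ _) hn0).2
    (ENNReal.ofReal_lt_ofReal_iff'.1 hn).1.le

lemma lowerHausdorffDim_le_upperPackingDim (hμ : μ ≠ 0) :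
    lowerHausdorffDim μ ≤ upperPackingDim μ := by
  have : (ae μ).NeBot := ae_neBot.2 hμ
  have hlow : ∀ᵐ x ∂μ, lowerHausdorffDim μ ≤ lowerLocalDim μ x := ae_essInf_le
  have hupp : ∀ᵐ x ∂μ, upperLocalDim μ x ≤ upperPackingDim μ := ae_le_essSup
  obtain ⟨x, hx, hx'⟩ := (hlow.and hupp).exists
  exact (hx.trans liminf_le_limsup).trans hx'

end LocalDim

/-! ### Dimensions of the limit measure -/

section Dimension

variable {b : ℕ} {Ω : Type*} [MeasurableSpace Ω] {P : Measure Ω} [IsProbabilityMeasure P]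
  {X : List (Fin b) → Ω → ℝ} {X₀ : Ω → ℝ} {ν : Measure (SymbSpace b)} [IsFiniteMeasure ν]
  {Qν : Ω → Measure (SymbSpace b)}

lemma ae_ofReal_le_lowerHausdorffDim (hM1 : CascadeM1 P X X₀) (hfin : entropyX P X₀ ≠ ∞)
    (hQν : IsCascadeLimit P X ν Qν) {c : ℝ} (hc : 0 ≤ c)
    (h : ENNReal.ofReal ((entropyX P X₀).toReal + c) < lowerHausdorffDim ν) :
    ∀ᵐ ω ∂P, ENNReal.ofReal c ≤ lowerHausdorffDim (Qν ω) := by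
  obtain ⟨t, -, hct, htν⟩ := ENNReal.lt_iff_exists_real_btwn.1 h
  have hν : ∀ᵐ x ∂ν, ∀ᶠ n in atTop, ν (cylinder (wordPrefix x n)) ≤ expRate (-t) n := by
    have hdim : ∀ᵐ x ∂ν, lowerHausdorffDim ν ≤ lowerLocalDim ν x := ae_essInf_le
    filter_upwards [hdim] with x hx
    exact eventually_measure_cylinder_le_of_lt_lowerLocalDim (htν.trans_le hx)
  filter_upwards [ae_ae_eventually_le_expRate hM1 hfin hQν hc
    (ENNReal.ofReal_lt_ofReal_iff'.1 hct).1 hν] with ω hω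
  refine le_essInf_of_ae_le _ ?_
  filter_upwards [hω, ae_forall_measure_cylinder_wordPrefix_ne_zero (Qν ω)] with x hx hpos
  exact ofReal_le_lowerLocalDim hpos hx

lemma ae_upperPackingDim_le_ofReal (hM1 : CascadeM1 P X X₀) (hfin : entropyX P X₀ ≠ ∞)
    (hQν : IsCascadeLimit P X ν Qν) {c : ℝ}
    (h : upperPackingDim ν < ENNReal.ofReal ((entropyX P X₀).toReal + c)) :
    ∀ᵐ ω ∂P, upperPackingDim (Qν ω) ≤ ENNReal.ofReal c := by
  obtain ⟨t, -, hνt, htc⟩ := ENNReal.lt_iff_exists_real_btwn.1 h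
  have hν : ∀ᵐ x ∂ν, ∀ᶠ n in atTop, expRate (-t) n ≤ ν (cylinder (wordPrefix x n)) := by
    have hdim : ∀ᵐ x ∂ν, upperLocalDim ν x ≤ upperPackingDim ν := ae_le_essSup
    filter_upwards [hdim, ae_forall_measure_cylinder_wordPrefix_ne_zero ν] with x hx hpos
    exact eventually_le_measure_cylinder_of_upperLocalDim_lt hpos (hx.trans_lt hνt)
  have htc' : t - c < (entropyX P X₀).toReal := by
    linarith [(ENNReal.ofReal_lt_ofReal_iff'.1 htc).1]
  filter_upwards [ae_ae_eventually_expRate_mul_le hM1 hfin hQν htc',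
    ae_ae_eventually_wordPrefix_of_ae hM1 hQν (G := fun n w => expRate (-t) n ≤ ν (cylinder w)) hν]
    with ω hω hω'
  refine essSup_le_of_ae_le _ ?_
  filter_upwards [hω, hω'] with x hx hx'
  refine upperLocalDim_le_ofReal ?_
  filter_upwards [hx, hx'] with n hn hn'
  calc expRate (-c) n = expRate (t - c) n * expRate (-t) n := by
        rw [expRate_mul_expRate]
        ring_nf
    _ ≤ expRate (t - c) n * ν (cylinder (wordPrefix x n)) := by gcongr
    _ ≤ Qν ω (cylinder (wordPrefix x n)) := hn

lemma ae_lowerHausdorffDim_sub_entropyX_le (hM1 : CascadeM1 P X X₀)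
    (hfin : entropyX P X₀ ≠ ∞) (hQν : IsCascadeLimit P X ν Qν) :
    ∀ᵐ ω ∂P, lowerHausdorffDim ν - entropyX P X₀ ≤ lowerHausdorffDim (Qν ω) := by
  refine (ae_essInf_le (f := fun ω => lowerHausdorffDim (Qν ω))).mono fun ω hω =>
    (le_of_forall_lt_imp_le_of_dense fun q hq => ?_).trans hω
  lift q to NNReal using ne_top_of_lt hq
  have hlt : ENNReal.ofReal ((entropyX P X₀).toReal + q) < lowerHausdorffDim ν := by
    rw [ENNReal.ofReal_add ENNReal.toReal_nonneg q.coe_nonneg, ENNReal.ofReal_toReal hfin,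
      ENNReal.ofReal_coe_nnreal]
    exact lt_tsub_iff_left.1 hq
  have hq' := ae_ofReal_le_lowerHausdorffDim hM1 hfin hQν q.coe_nonneg hlt
  rw [ENNReal.ofReal_coe_nnreal] at hq'
  exact le_essInf_of_ae_le _ hq'

lemma ae_upperPackingDim_le_sub_entropyX (hM1 : CascadeM1 P X X₀)
    (hfin : entropyX P X₀ ≠ ∞) (hQν : IsCascadeLimit P X ν Qν) :
    ∀ᵐ ω ∂P, upperPackingDim (Qν ω) ≤ upperPackingDim ν - entropyX P X₀ := by
  refine (ae_le_essSup (f := fun ω => upperPackingDim (Qν ω))).mono fun ω hω =>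
    hω.trans (le_of_forall_gt_imp_ge_of_dense fun q hq => ?_)
  rcases eq_or_ne q ∞ with rfl | hqtop
  · exact le_top
  lift q to NNReal using hqtop
  have hlt : upperPackingDim ν < ENNReal.ofReal ((entropyX P X₀).toReal + q) := by
    rw [ENNReal.ofReal_add ENNReal.toReal_nonneg q.coe_nonneg, ENNReal.ofReal_toReal hfin,
      ENNReal.ofReal_coe_nnreal]
    exact le_add_tsub.trans_lt (ENNReal.add_lt_add_left hfin hq)
  have hq' := ae_upperPackingDim_le_ofReal hM1 hfin hQν hlt
  rw [ENNReal.ofReal_coe_nnreal] at hq'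
  exact essSup_le_of_ae_le _ hq'

end Dimension

theorem dimension_bounds_of_limit_cascade_measure_general
    {b : ℕ} {Ω : Type*} [MeasurableSpace Ω] (P : Measure Ω) [IsProbabilityMeasure P]
    (X : List (Fin b) → Ω → ℝ) (X₀ : Ω → ℝ) (hM1 : CascadeM1 P X X₀)
    (hfin : entropyX P X₀ ≠ ∞) (ν : Measure (SymbSpace b)) [IsFiniteMeasure ν]
    (Qν : Ω → Measure (SymbSpace b)) (hQν : IsCascadeLimit P X ν Qν) :
    ∀ᵐ ω ∂P, Qν ω ≠ 0 →
      lowerHausdorffDim ν - entropyX P X₀ ≤ lowerHausdorffDim (Qν ω) ∧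
      lowerHausdorffDim (Qν ω) ≤ upperPackingDim (Qν ω) ∧
      upperPackingDim (Qν ω) ≤ upperPackingDim ν - entropyX P X₀ := by
  filter_upwards [ae_lowerHausdorffDim_sub_entropyX_le hM1 hfin hQν,
    ae_upperPackingDim_le_sub_entropyX hM1 hfin hQν] with ω hlower hupper hne
  exact ⟨hlower, lowerHausdorffDim_le_upperPackingDim hne, hupper⟩

/-- **Theorem (dimension bounds for the limit measure).** Let `Q` be a Mandelbrot
multiplicative cascade (assumption (M1)) acting on a Borel probability measure `ν` on `Σ`,
and let `Q·ν` denote the almost-sure weak limit of the measures with density `Q_n` with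
respect to `ν` (characterised by convergence on every cylinder). If for `ν`-almost every
`x` the lower local dimension of `ν` at `x` is strictly greater than `h_X`, then with
probability 1, conditional on `Q·ν ≠ 0`,
`dim̲_H(ν) − h_X ≤ dim̲_H(Q·ν) ≤ dim̄_P(Q·ν) ≤ dim̄_P(ν) − h_X`. -/
theorem dimension_bounds_of_limit_cascade_measure
    {b : ℕ} (hb : 2 ≤ b)
    {Ω : Type*} [MeasurableSpace Ω] (P : Measure Ω) [IsProbabilityMeasure P]
    (X : List (Fin b) → Ω → ℝ) (X₀ : Ω → ℝ)
    (hM1 : CascadeM1 P X X₀)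
    (ν : Measure (SymbSpace b)) [IsProbabilityMeasure ν]
    (Qν : Ω → Measure (SymbSpace b))
    (hQν : ∀ᵐ ω ∂P, ∀ w : List (Fin b),
      Tendsto (fun n => ∫⁻ x in cylinder w, ENNReal.ofReal (cascadeY X (wordPrefix x n) ω) ∂ν)
        atTop (nhds (Qν ω (cylinder w))))
    (hdim : ∀ᵐ x ∂ν, entropyX P X₀ < lowerLocalDim ν x) :
    ∀ᵐ ω ∂P, Qν ω ≠ 0 →
      lowerHausdorffDim ν - entropyX P X₀ ≤ lowerHausdorffDim (Qν ω) ∧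
      lowerHausdorffDim (Qν ω) ≤ upperPackingDim (Qν ω) ∧
      upperPackingDim (Qν ω) ≤ upperPackingDim ν - entropyX P X₀ := by
  obtain ⟨x, hx⟩ := hdim.exists
  simp only [← withDensity_apply _ (measurableSet_cylinder _)] at hQν
  exact dimension_bounds_of_limit_cascade_measure_general P X X₀ hM1 (ne_top_of_lt hx) ν Qν hQν

end
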